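/- arXiv:2602.14801 — 2 statements merged into one kernel-verified Lean document; each statement's English description precedes it below -/
import Mathlib

section
/- Let f be holomorphic on the sector Δ = {z ∈ ℂ : Re z > 0 and |Im z| < Re z}. Then, as an identity in [0,∞], ∫_Δ |f(z)|² dA(z) = ∑_{n=0}^∞ (2^n/(2n+1)!) ∫_0^∞ x^{2n+1} |f^{(n)}(x)|² dx, where f^{(n)} denotes the n-th complex derivative of f. In particular, if f belongs to the Bergman space A²(Δ) (i.e. ∫_Δ |f|² dA < ∞), then the right-hand side is finite and equals the squared Bergman norm of f. -/
open MeasureTheory Set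
open scoped ENNReal NNReal

/-- The open sector `Δ = {z : Re z > 0 ∧ |Im z| < Re z}`. -/
def Delta : Set ℂ := {z : ℂ | 0 < z.re ∧ |z.im| < z.re}

/-!
Average over the discs about the points `x > 0` of the real axis. For the weight
`1 / √(x² - 2 |z - x|²)` on the disc of radius `x / √2` about `x`, two integrals are elementary.

* In `z`, with `f` expanded at `x`: by Parseval on circles the weighted integral of `|f|²` is a
  series in `|f⁽ⁿ⁾(x)|²` whose coefficients are radial moments of the weight, that is, Wallis
  integrals `∫ cos²ⁿ⁺¹`.
* In `x`, with `z = a + ib` fixed in the sector: `x² - 2 |z - x|² = 2 (a² - b²) - (x - 2a)²`, so the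
  weight is an unnormalised arcsine density and its integral is `π`, whatever `z` is.

By Tonelli, integrating the first over `x` gives `π` times the integral of `|f|²` over the sector.
-/

open Metric Real
open scoped ComplexConjugate ComplexInnerProductSpace Nat

section CircleAverage

variable {E : Type*} [NormedAddCommGroup E]

theorem hasSum_circleAverage_of_norm_le [NormedSpace ℝ E] {ι : Type*} [Countable ι]
    {F : ι → ℂ → E} {g : ℂ → E} {u : ι → ℝ} {c : ℂ} {r : ℝ}
    (hF : ∀ i, ContinuousOn (F i) (sphere c |r|)) (hu : Summable u)
    (hFu : ∀ i, ∀ z ∈ sphere c |r|, ‖F i z‖ ≤ u i)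
    (hg : ∀ z ∈ sphere c |r|, HasSum (fun i ↦ F i z) (g z)) :
    HasSum (fun i ↦ circleAverage (F i) c r) (circleAverage g c r) := by
  have hmem (θ : ℝ) : circleMap c r θ ∈ sphere c |r| := circleMap_mem_sphere' c r θ
  refine (intervalIntegral.hasSum_integral_of_dominated_convergence (fun i _ ↦ u i) (fun i ↦ ?_)
    (fun i ↦ .of_forall fun θ _ ↦ hFu i _ (hmem θ)) (.of_forall fun _ _ ↦ hu)
    intervalIntegrable_const (.of_forall fun θ _ ↦ hg _ (hmem θ))).const_smul _
  exact ((hF i).comp_continuous (continuous_circleMap c r) hmem).aestronglyMeasurable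

variable {c : ℂ} {r R : ℝ} {f : ℂ → E}

theorem circleAverage_inv_pow_smul [NormedSpace ℂ E] [CompleteSpace E] (hr : 0 < r)
    (hf : DiffContOnCl ℂ f (ball c r)) (n : ℕ) :
    circleAverage (fun z ↦ ((z - c) ^ n)⁻¹ • f z) c r = (n ! : ℂ)⁻¹ • iteratedDeriv n f c := by
  have hcauchy := hf.circleIntegral_one_div_sub_center_pow_smul hr n
  rw [circleAverage_eq_circleIntegral hr.ne']
  simp_rw [one_div, pow_succ', mul_inv, mul_smul] at hcauchy
  rw [hcauchy, smul_smul, div_eq_mul_inv, inv_mul_cancel_left₀ Complex.two_pi_I_ne_zero]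

theorem summable_norm_taylorSeries_on_ball [NormedSpace ℂ E] [CompleteSpace E] (hr : 0 ≤ r)
    (hrR : r < R) (hf : DifferentiableOn ℂ f (ball c R)) :
    Summable fun n : ℕ ↦ (n ! : ℝ)⁻¹ * (r ^ n * ‖iteratedDeriv n f c‖) := by
  obtain ⟨ρ, hrρ, hρR⟩ := exists_between hrR
  have hρ : 0 < ρ := hr.trans_lt hrρ
  have hball : closedBall c ρ ⊆ ball c R := closedBall_subset_ball hρR
  obtain ⟨C, hC⟩ := (isCompact_sphere c ρ).exists_bound_of_continuousOn
    (hf.continuousOn.mono (sphere_subset_closedBall.trans hball))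
  have hgeom : Summable fun n : ℕ ↦ (r / ρ) ^ n * C :=
    (summable_geometric_of_lt_one (by positivity) ((div_lt_one hρ).mpr hrρ)).mul_right C
  refine hgeom.of_nonneg_of_le (fun n ↦ by positivity) fun n ↦ ?_
  calc (n ! : ℝ)⁻¹ * (r ^ n * ‖iteratedDeriv n f c‖)
      ≤ (n ! : ℝ)⁻¹ * (r ^ n * (n ! * C / ρ ^ n)) := by
        gcongr
        exact Complex.norm_iteratedDeriv_le_of_forall_mem_sphere_norm_le n hρ
          (hf.diffContOnCl_ball hball) hC
    _ = (r / ρ) ^ n * C := by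
        rw [div_pow]; field_simp

variable [InnerProductSpace ℂ E]

-- On the circle `conj (z - c) = r² / (z - c)`, which turns pairings with Taylor terms into
-- Cauchy integrals.
theorem inner_pow_sub_center_smul_left {z : ℂ} (hz : z ∈ sphere c r) (n : ℕ) (v w : E) :
    ⟪(z - c) ^ n • v, w⟫ = (r : ℂ) ^ (2 * n) * ⟪v, ((z - c) ^ n)⁻¹ • w⟫ := by
  have hconj : conj (z - c) * (z - c) = (r : ℂ) ^ 2 := by
    rw [Complex.conj_mul', ← dist_eq_norm, mem_sphere.mp hz]
  rw [inner_smul_left, inner_smul_right, ← mul_assoc, pow_mul, ← hconj, mul_pow, ← map_pow]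
  rcases eq_or_ne ((z - c) ^ n) 0 with hzero | hne
  · simp only [hzero, map_zero, zero_mul]
  · rw [mul_inv_cancel_right₀ hne]

variable [CompleteSpace E]

theorem circleAverage_inner_taylorTerm (hr : 0 < r) (hf : DiffContOnCl ℂ f (ball c r)) (n : ℕ) :
    circleAverage (fun z ↦ ⟪(n ! : ℂ)⁻¹ • (z - c) ^ n • iteratedDeriv n f c, f z⟫) c r =
      ((r ^ n / n ! * ‖iteratedDeriv n f c‖) ^ 2 : ℝ) := by
  set a := iteratedDeriv n f c
  let innerLeft : E →L[ℝ] ℂ := (innerSL ℂ a).restrictScalars ℝ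
  have hsphere : EqOn (fun z ↦ ⟪(n ! : ℂ)⁻¹ • (z - c) ^ n • a, f z⟫)
      (fun z ↦ ((n ! : ℂ)⁻¹ * r ^ (2 * n)) • innerLeft (((z - c) ^ n)⁻¹ • f z))
      (sphere c |r|) := fun z hz ↦ by
    rw [abs_of_pos hr] at hz
    simp only [innerLeft, inner_smul_left _ _ (n ! : ℂ)⁻¹, inner_pow_sub_center_smul_left hz,
      map_inv₀, Complex.conj_natCast, smul_eq_mul, mul_assoc,
      ContinuousLinearMap.coe_restrictScalars', innerSL_apply_apply]
  have hint : CircleIntegrable (fun z ↦ ((z - c) ^ n)⁻¹ • f z) c r := by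
    refine ContinuousOn.circleIntegrable hr.le (ContinuousOn.smul (ContinuousOn.inv₀ (by fun_prop)
      fun z hz ↦ pow_ne_zero n (sub_ne_zero.mpr (ne_of_mem_sphere hz hr.ne'))) ?_)
    exact hf.continuousOn_ball.mono sphere_subset_closedBall
  have hnorm : ⟪a, a⟫ = (‖a‖ : ℂ) ^ 2 := inner_self_eq_norm_sq_to_K a
  calc circleAverage (fun z ↦ ⟪(n ! : ℂ)⁻¹ • (z - c) ^ n • a, f z⟫) c r
      = ((n ! : ℂ)⁻¹ * r ^ (2 * n)) •
          circleAverage (innerLeft ∘ fun z ↦ ((z - c) ^ n)⁻¹ • f z) c r := by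
        rw [circleAverage_congr_sphere hsphere, circleAverage_fun_smul]; rfl
    _ = ((n ! : ℂ)⁻¹ * r ^ (2 * n)) * ⟪a, (n ! : ℂ)⁻¹ • a⟫ := by
        rw [innerLeft.circleAverage_comp_comm hint, circleAverage_inv_pow_smul hr hf]; rfl
    _ = ((r ^ n / n ! * ‖a‖) ^ 2 : ℝ) := by
        rw [inner_smul_right, hnorm]
        push_cast
        ring

theorem hasSum_circleAverage_sq_norm (hr : 0 < r) (hrR : r < R)
    (hf : DifferentiableOn ℂ f (ball c R)) :
    HasSum (fun n ↦ (r ^ n / n ! * ‖iteratedDeriv n f c‖) ^ 2)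
      (circleAverage (fun z ↦ ‖f z‖ ^ 2) c r) := by
  have hball : closedBall c r ⊆ ball c R := closedBall_subset_ball hrR
  have hsphere : sphere c |r| ⊆ ball c R := by
    rw [abs_of_pos hr]; exact sphere_subset_closedBall.trans hball
  have htaylor (z : ℂ) (hz : z ∈ ball c R) :
      HasSum (fun n ↦ (n ! : ℂ)⁻¹ • (z - c) ^ n • iteratedDeriv n f c) (f z) :=
    Complex.hasSum_taylorSeries_on_ball hf hz
  have hfc : ContinuousOn f (sphere c |r|) := hf.continuousOn.mono hsphere
  obtain ⟨C, hC⟩ := (isCompact_sphere c |r|).exists_bound_of_continuousOn hfc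
  have hterm (n : ℕ) (z : ℂ) (hz : z ∈ sphere c |r|) :
      ‖(n ! : ℂ)⁻¹ • (z - c) ^ n • iteratedDeriv n f c‖ =
        (n ! : ℝ)⁻¹ * (r ^ n * ‖iteratedDeriv n f c‖) := by
    rw [norm_smul, norm_smul, norm_pow, ← dist_eq_norm, mem_sphere.mp hz, abs_of_pos hr, norm_inv,
      Complex.norm_natCast]
  have havg := hasSum_circleAverage_of_norm_le (r := r) (c := c)
    (F := fun n z ↦ ⟪(n ! : ℂ)⁻¹ • (z - c) ^ n • iteratedDeriv n f c, f z⟫) (fun n ↦ by fun_prop)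
    ((summable_norm_taylorSeries_on_ball hr.le hrR hf).mul_right C)
    (fun n z hz ↦ (norm_inner_le_norm _ _).trans (by rw [hterm n z hz]; gcongr; exact hC z hz))
    (fun z hz ↦ (innerSLFlip ℂ (f z)).hasSum (htaylor z (hsphere hz)))
  simp_rw [circleAverage_inner_taylorTerm hr (hf.diffContOnCl_ball hball)] at havg
  have hofReal : ((circleAverage (fun z ↦ ‖f z‖ ^ 2) c r : ℝ) : ℂ) =
      circleAverage (fun z ↦ ⟪f z, f z⟫) c r := by
    have hint : CircleIntegrable (fun z ↦ ‖f z‖ ^ 2) c r :=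
      (hfc.norm.pow 2).circleIntegrable'
    simpa [Function.comp_def, inner_self_eq_norm_sq_to_K] using
      (Complex.ofRealCLM.circleAverage_comp_comm hint).symm
  rw [← Complex.hasSum_ofReal, hofReal]
  exact havg

end CircleAverage

section Polar

theorem measurable_indicator_of_continuousOn {α β : Type*} [TopologicalSpace α] [MeasurableSpace α]
    [OpensMeasurableSpace α] [TopologicalSpace β] [MeasurableSpace β] [BorelSpace β] [Zero β]
    {s : Set α} {g : α → β} (hs : IsOpen s) (hg : ContinuousOn g s) :
    Measurable (s.indicator g) := by
  classical
  rw [← piecewise_eq_indicator]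
  exact hg.measurable_piecewise continuousOn_const hs.measurableSet

theorem continuous_comp_circleMap {X : Type*} [TopologicalSpace X] {f : ℂ → X} {c : ℂ} {r R : ℝ}
    (hr : 0 ≤ r) (hrR : r < R) (hf : ContinuousOn f (ball c R)) :
    Continuous fun θ ↦ f (circleMap c r θ) :=
  hf.comp_continuous (continuous_circleMap c r) fun θ ↦
    closedBall_subset_ball hrR (circleMap_mem_closedBall c hr θ)

theorem lintegral_eq_lintegral_circleMap {g : ℂ → ℝ≥0∞} (hg : Measurable g) (c : ℂ) :
    ∫⁻ z, g z = ∫⁻ r in Ioi 0, ENNReal.ofReal r * ∫⁻ θ in Ioo (-π) π, g (circleMap c r θ) := by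
  have hpolar (p : ℝ × ℝ) : c + Complex.polarCoord.symm p = circleMap c p.1 p.2 := by
    rw [Complex.polarCoord_symm_apply, circleMap, Complex.exp_mul_I]
    push_cast
    rfl
  have hcirc : Measurable fun p : ℝ × ℝ ↦ circleMap c p.1 p.2 := by
    unfold circleMap; fun_prop
  have hmeas : Measurable fun p : ℝ × ℝ ↦ ENNReal.ofReal p.1 * g (circleMap c p.1 p.2) :=
    measurable_fst.ennreal_ofReal.mul (hg.comp hcirc)
  rw [← lintegral_add_left_eq_self g c, ← Complex.lintegral_comp_polarCoord_symm]
  simp_rw [hpolar, smul_eq_mul]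
  rw [polarCoord_target, Measure.volume_eq_prod, setLIntegral_prod _ hmeas.aemeasurable]
  exact lintegral_congr fun r ↦ lintegral_const_mul' _ _ ENNReal.ofReal_ne_top

theorem setLIntegral_ball_eq_lintegral_circleMap {c : ℂ} {R : ℝ} {g : ℂ → ℝ≥0∞}
    (hg : Measurable ((ball c R).indicator g)) :
    ∫⁻ z in ball c R, g z =
      ∫⁻ r in Ioo 0 R, ENNReal.ofReal r * ∫⁻ θ in Ioo (-π) π, g (circleMap c r θ) := by
  have hindicator (r : ℝ) (hr : 0 < r) :
      ENNReal.ofReal r * ∫⁻ θ in Ioo (-π) π, (ball c R).indicator g (circleMap c r θ) =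
        (Iio R).indicator
          (fun s ↦ ENNReal.ofReal s * ∫⁻ θ in Ioo (-π) π, g (circleMap c s θ)) r := by
    have hmem (θ : ℝ) : circleMap c r θ ∈ ball c R ↔ r ∈ Iio R := by
      rw [mem_ball, mem_sphere.mp (circleMap_mem_sphere c hr.le θ), mem_Iio]
    by_cases hrR : r ∈ Iio R <;> simp [hmem, hrR]
  rw [← lintegral_indicator measurableSet_ball, lintegral_eq_lintegral_circleMap hg c,
    setLIntegral_congr_fun measurableSet_Ioi hindicator, setLIntegral_indicator measurableSet_Iio,
    Iio_inter_Ioi]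

variable {E : Type*} [NormedAddCommGroup E] [InnerProductSpace ℂ E] [CompleteSpace E]
  {c : ℂ} {r R : ℝ} {f : ℂ → E}

theorem lintegral_circleMap_sq_enorm (hr : 0 < r) (hrR : r < R)
    (hf : DifferentiableOn ℂ f (ball c R)) :
    ∫⁻ θ in Ioo (-π) π, ‖f (circleMap c r θ)‖ₑ ^ 2 =
      ∑' n : ℕ, ENNReal.ofReal (2 * π * (r ^ n / n !) ^ 2) * ‖iteratedDeriv n f c‖ₑ ^ 2 := by
  have hsq (v : E) : ‖v‖ₑ ^ 2 = ENNReal.ofReal (‖v‖ ^ 2) := by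
    rw [ENNReal.ofReal_pow (norm_nonneg v), ofReal_norm]
  have hcont : Continuous fun θ ↦ ‖f (circleMap c r θ)‖ ^ 2 :=
    (continuous_comp_circleMap hr.le hrR hf.continuousOn).norm.pow 2
  have hintegral : ∫ θ in Ioc (-π) π, ‖f (circleMap c r θ)‖ ^ 2 =
      2 * π * circleAverage (fun z ↦ ‖f z‖ ^ 2) c r := by
    rw [circleAverage_eq_integral_add (-π), intervalIntegral.integral_comp_add_right
      (fun θ ↦ ‖f (circleMap c r θ)‖ ^ 2), ← intervalIntegral.integral_of_le (by linarith [pi_pos]),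
      smul_eq_mul, mul_inv_cancel_left₀ two_pi_pos.ne']
    ring_nf
  have hparseval := (hasSum_circleAverage_sq_norm hr hrR hf).mul_left (2 * π)
  simp_rw [hsq]
  rw [restrict_Ioo_eq_restrict_Ioc, ← ofReal_integral_eq_lintegral_ofReal hcont.integrableOn_Ioc
    (.of_forall fun _ ↦ by positivity), hintegral, ← hparseval.tsum_eq,
    ENNReal.ofReal_tsum_of_nonneg (fun _ ↦ by positivity) hparseval.summable]
  refine tsum_congr fun n ↦ ?_
  rw [← ENNReal.ofReal_mul (by positivity), mul_pow, ← mul_assoc]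

theorem setLIntegral_ball_mul_sq_enorm (hf : DifferentiableOn ℂ f (ball c R)) {k : ℝ → ℝ≥0∞}
    (hk : Measurable k) :
    ∫⁻ z in ball c R, k (dist z c) * ‖f z‖ₑ ^ 2 =
      ∑' n : ℕ, ENNReal.ofReal (2 * π / n ! ^ 2) *
        (∫⁻ r in Ioo 0 R, k r * ENNReal.ofReal (r ^ (2 * n + 1))) * ‖iteratedDeriv n f c‖ₑ ^ 2 := by
  have hcircle (r : ℝ) (hr : r ∈ Ioo 0 R) :
      ENNReal.ofReal r * ∫⁻ θ in Ioo (-π) π,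
          k (dist (circleMap c r θ) c) * ‖f (circleMap c r θ)‖ₑ ^ 2 =
        ∑' n : ℕ, ENNReal.ofReal (2 * π / n ! ^ 2) * (k r * ENNReal.ofReal (r ^ (2 * n + 1))) *
          ‖iteratedDeriv n f c‖ₑ ^ 2 := by
    have hr0 : 0 < r := hr.1
    have hcont : Continuous fun θ ↦ f (circleMap c r θ) :=
      continuous_comp_circleMap hr0.le hr.2 hf.continuousOn
    have hdist (θ : ℝ) : dist (circleMap c r θ) c = r := circleMap_mem_sphere c hr0.le θ
    simp_rw [hdist]
    rw [lintegral_const_mul _ (hcont.enorm.measurable.pow_const 2),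
      lintegral_circleMap_sq_enorm hr0 hr.2 hf, ← ENNReal.tsum_mul_left, ← ENNReal.tsum_mul_left]
    refine tsum_congr fun n ↦ ?_
    have hcoeff : ENNReal.ofReal r * ENNReal.ofReal (2 * π * (r ^ n / n !) ^ 2) =
        ENNReal.ofReal (2 * π / n ! ^ 2) * ENNReal.ofReal (r ^ (2 * n + 1)) := by
      rw [← ENNReal.ofReal_mul hr0.le, ← ENNReal.ofReal_mul (by positivity)]
      ring_nf
    rw [mul_left_comm (ENNReal.ofReal r), mul_left_comm (ENNReal.ofReal (2 * π / n ! ^ 2)),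
      ← hcoeff]
    ring
  have hmeas : Measurable ((ball c R).indicator fun z ↦ k (dist z c) * ‖f z‖ₑ ^ 2) := by
    have hsq : ContinuousOn (fun z ↦ ‖f z‖ₑ ^ 2) (ball c R) :=
      (ENNReal.continuous_pow 2).comp_continuousOn hf.continuousOn.enorm
    have hindicator : ((ball c R).indicator fun z ↦ k (dist z c) * ‖f z‖ₑ ^ 2) =
        fun z ↦ k (dist z c) * (ball c R).indicator (fun z ↦ ‖f z‖ₑ ^ 2) z :=
      funext fun z ↦ indicator_mul_right _ _ _
    rw [hindicator]
    exact (hk.comp (by fun_prop)).mul (measurable_indicator_of_continuousOn isOpen_ball hsq)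
  rw [setLIntegral_ball_eq_lintegral_circleMap hmeas,
    setLIntegral_congr_fun measurableSet_Ioo hcircle, lintegral_tsum fun n ↦ by fun_prop]
  refine tsum_congr fun n ↦ ?_
  rw [lintegral_mul_const _ (by fun_prop), lintegral_const_mul _ (by fun_prop)]

end Polar

section ArcsineDensity

theorem setLIntegral_inv_sqrt_sq_sub_sq_mul {c ρ b : ℝ} (hρ : 0 < ρ) (hb : 0 ≤ b) (hbπ : b ≤ π)
    (g : ℝ → ℝ≥0∞) :
    ∫⁻ x in Ioo (c + ρ * cos b) (c + ρ), ENNReal.ofReal (√(ρ ^ 2 - (x - c) ^ 2))⁻¹ * g x =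
      ∫⁻ t in Ioo 0 b, g (c + ρ * cos t) := by
  have hanti : StrictAntiOn (fun t ↦ c + ρ * cos t) (Icc 0 b) := fun t ht u hu hlt ↦ by
    have := strictAntiOn_cos ⟨ht.1, ht.2.trans hbπ⟩ ⟨hu.1, hu.2.trans hbπ⟩ hlt
    beta_reduce
    gcongr
  have hderiv (t : ℝ) (_ : t ∈ Ioo 0 b) :
      HasDerivWithinAt (fun t ↦ c + ρ * cos t) (ρ * -sin t) (Ioo 0 b) t :=
    (((hasDerivAt_cos t).const_mul ρ).const_add c).hasDerivWithinAt
  have himage : (fun t ↦ c + ρ * cos t) '' Ioo 0 b = Ioo (c + ρ * cos b) (c + ρ) := by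
    rw [ContinuousOn.image_Ioo_of_strictAntiOn hb (by fun_prop) hanti, cos_zero, mul_one]
  rw [← himage, lintegral_image_eq_lintegral_deriv_mul_of_antitoneOn measurableSet_Ioo hderiv
    (hanti.antitoneOn.mono Ioo_subset_Icc_self)]
  refine setLIntegral_congr_fun measurableSet_Ioo fun t ht ↦ ?_
  have hsin : 0 < sin t := sin_pos_of_pos_of_lt_pi ht.1 (ht.2.trans_le hbπ)
  have hsqrt : √(ρ ^ 2 - (c + ρ * cos t - c) ^ 2) = ρ * sin t := by
    rw [← sqrt_sq (mul_pos hρ hsin).le, mul_pow, sin_sq]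
    ring_nf
  rw [hsqrt, ← mul_assoc, ← ENNReal.ofReal_mul (by nlinarith), mul_neg, neg_neg,
    mul_inv_cancel₀ (mul_pos hρ hsin).ne', ENNReal.ofReal_one, one_mul]

theorem prod_two_mul_add_two_div_two_mul_add_three (n : ℕ) :
    ∏ i ∈ Finset.range n, (2 * (i : ℝ) + 2) / (2 * i + 3) = 4 ^ n * n ! ^ 2 / (2 * n + 1)! := by
  induction n with
  | zero => simp
  | succ n ih =>
    rw [Finset.prod_range_succ, ih, show 2 * (n + 1) + 1 = 2 * n + 1 + 1 + 1 by ring,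
      Nat.factorial_succ (2 * n + 1 + 1), Nat.factorial_succ (2 * n + 1), Nat.factorial_succ n]
    push_cast
    field_simp
    ring

theorem integral_cos_pow_odd_zero_pi_div_two (n : ℕ) :
    ∫ t in 0..π / 2, cos t ^ (2 * n + 1) = 4 ^ n * n ! ^ 2 / (2 * n + 1)! := by
  rw [EulerSine.integral_cos_pow_eq, integral_sin_pow_odd,
    prod_two_mul_add_two_div_two_mul_add_three]
  ring

theorem setLIntegral_cos_pow_odd (n : ℕ) :
    ∫⁻ t in Ioo 0 (π / 2), ENNReal.ofReal (cos t ^ (2 * n + 1)) =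
      ENNReal.ofReal (4 ^ n * n ! ^ 2 / (2 * n + 1)!) := by
  have hcont : Continuous fun t ↦ cos t ^ (2 * n + 1) := by fun_prop
  have hnonneg : ∀ᵐ t ∂volume.restrict (Ioc 0 (π / 2)), 0 ≤ cos t ^ (2 * n + 1) :=
    (ae_restrict_mem measurableSet_Ioc).mono fun t ht ↦
      pow_nonneg (cos_nonneg_of_neg_pi_div_two_le_of_le (by linarith [ht.1, pi_pos]) ht.2) _
  rw [restrict_Ioo_eq_restrict_Ioc, ← ofReal_integral_eq_lintegral_ofReal hcont.integrableOn_Ioc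
    hnonneg, ← intervalIntegral.integral_of_le (by positivity),
    integral_cos_pow_odd_zero_pi_div_two]

theorem setLIntegral_inv_sqrt_sq_sub_sq_mul_pow_odd {ρ : ℝ} (hρ : 0 < ρ) (n : ℕ) :
    ∫⁻ r in Ioo 0 ρ, ENNReal.ofReal (√(ρ ^ 2 - r ^ 2))⁻¹ * ENNReal.ofReal (r ^ (2 * n + 1)) =
      ENNReal.ofReal (ρ ^ (2 * n + 1) * (4 ^ n * n ! ^ 2 / (2 * n + 1)!)) := by
  have hpow : 0 ≤ ρ ^ (2 * n + 1) := by positivity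
  have hsubst := setLIntegral_inv_sqrt_sq_sub_sq_mul (c := 0) hρ pi_div_two_pos.le
    (half_le_self pi_pos.le) fun r ↦ ENNReal.ofReal (r ^ (2 * n + 1))
  simp_rw [cos_pi_div_two, mul_zero, zero_add, sub_zero, mul_pow, ENNReal.ofReal_mul hpow] at hsubst
  rw [hsubst, lintegral_const_mul' _ _ ENNReal.ofReal_ne_top, setLIntegral_cos_pow_odd,
    ENNReal.ofReal_mul hpow]

end ArcsineDensity

section DiscWeight

/-- The radial weight `1 / √(x² - 2r²)` on the disc of radius `x / √2` about `x`, the largest disc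
with centre `x` inside `Delta`. For `x² ≤ 2r²` the square root is `0` and so is its inverse, so the
weight vanishes outside that disc. -/
noncomputable def discWeight (x r : ℝ) : ℝ≥0∞ := ENNReal.ofReal (√(x ^ 2 - 2 * r ^ 2))⁻¹

@[fun_prop]
theorem measurable_discWeight {α : Type*} [MeasurableSpace α] {u v : α → ℝ} (hu : Measurable u)
    (hv : Measurable v) : Measurable fun a ↦ discWeight (u a) (v a) := by
  unfold discWeight; fun_prop

theorem discWeight_eq_zero {x r : ℝ} (h : x ^ 2 ≤ 2 * r ^ 2) : discWeight x r = 0 := by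
  rw [discWeight, sqrt_eq_zero_of_nonpos (by linarith), inv_zero, ENNReal.ofReal_zero]

theorem discWeight_eq_zero_of_notMem_ball {x : ℝ} {z c : ℂ} (hx : 0 < x)
    (hz : z ∉ ball c (x / √2)) : discWeight x (dist z c) = 0 := by
  refine discWeight_eq_zero ?_
  rw [mem_ball, not_lt, div_le_iff₀ (by positivity)] at hz
  calc x ^ 2 ≤ (dist z c * √2) ^ 2 := by gcongr
    _ = 2 * dist z c ^ 2 := by rw [mul_pow, sq_sqrt zero_le_two, mul_comm]

theorem setLIntegral_discWeight_mul_pow {x : ℝ} (hx : 0 < x) (n : ℕ) :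
    ∫⁻ r in Ioo 0 (x / √2), discWeight x r * ENNReal.ofReal (r ^ (2 * n + 1)) =
      ENNReal.ofReal (2 ^ n * n ! ^ 2 / (2 * (2 * n + 1)!) * x ^ (2 * n + 1)) := by
  set ρ := x / √2 with hρ
  have hρ0 : 0 < ρ := by positivity
  have hρsq : x ^ 2 = 2 * ρ ^ 2 := by rw [hρ, div_pow, sq_sqrt zero_le_two]; ring
  have hweight (r : ℝ) : discWeight x r =
      ENNReal.ofReal (√2)⁻¹ * ENNReal.ofReal (√(ρ ^ 2 - r ^ 2))⁻¹ := by
    rw [discWeight, hρsq, ← mul_sub, sqrt_mul zero_le_two, mul_inv,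
      ENNReal.ofReal_mul (by positivity)]
  have hsqrt : √2 * √2 ^ (2 * n + 1) = 2 * 2 ^ n := by
    rw [pow_succ', ← mul_assoc, mul_self_sqrt zero_le_two, pow_mul, sq_sqrt zero_le_two]
  have hscale : (√2)⁻¹ * ρ ^ (2 * n + 1) = x ^ (2 * n + 1) / (2 * 2 ^ n) := by
    rw [← hsqrt, hρ, div_pow]
    field_simp
  simp_rw [hweight, mul_assoc]
  rw [lintegral_const_mul' _ _ ENNReal.ofReal_ne_top,
    setLIntegral_inv_sqrt_sq_sub_sq_mul_pow_odd hρ0, ← ENNReal.ofReal_mul (by positivity),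
    ← mul_assoc, hscale, show (4 : ℝ) ^ n = 2 ^ n * 2 ^ n by rw [← mul_pow]; norm_num]
  congr 1
  field_simp

theorem lintegral_discWeight_dist {z : ℂ} (hz : z ∈ Delta) :
    ∫⁻ x in Ioi (0 : ℝ), discWeight x (dist z x) = ENNReal.ofReal π := by
  obtain ⟨hre, him⟩ := hz
  have himsq : z.im ^ 2 < z.re ^ 2 := sq_lt_sq' (abs_lt.mp him).1 (abs_lt.mp him).2
  set c := 2 * z.re
  set ρ := √(2 * (z.re ^ 2 - z.im ^ 2))
  have hρ0 : 0 < ρ := sqrt_pos.mpr (by linarith)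
  have hρsq : ρ ^ 2 = 2 * (z.re ^ 2 - z.im ^ 2) := sq_sqrt (by linarith)
  have hρc : ρ < c := by nlinarith [sq_nonneg z.im]
  have hcircle (x : ℝ) : x ^ 2 - 2 * dist z x ^ 2 = ρ ^ 2 - (x - c) ^ 2 := by
    rw [Complex.dist_eq, ← Complex.normSq_eq_norm_sq, Complex.normSq_apply, hρsq]
    simp only [Complex.sub_re, Complex.sub_im, Complex.ofReal_re, Complex.ofReal_im]
    ring
  have hsupport : Function.support (fun x : ℝ ↦ discWeight x (dist z x)) ⊆ Ioo (c - ρ) (c + ρ) := by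
    refine fun x ↦ not_imp_comm.mp fun hx ↦ discWeight_eq_zero ?_
    have hdist : ρ ≤ |x - c| := by
      rwa [← ball_eq_Ioo, mem_ball, dist_eq, not_lt] at hx
    have hsq : ρ ^ 2 ≤ (x - c) ^ 2 := by rw [← sq_abs (x - c)]; gcongr
    linarith [hcircle x]
  have hsubset : Ioo (c - ρ) (c + ρ) ⊆ Ioi 0 := fun x hx ↦ (sub_pos.mpr hρc).trans hx.1
  have hsubst := setLIntegral_inv_sqrt_sq_sub_sq_mul (c := c) hρ0 pi_pos.le le_rfl fun _ ↦ 1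
  rw [setLIntegral_eq_of_support_subset (hsupport.trans hsubset),
    ← setLIntegral_eq_of_support_subset hsupport]
  simp_rw [discWeight, hcircle]
  simpa [← sub_eq_add_neg] using hsubst

theorem isOpen_Delta : IsOpen Delta :=
  (isOpen_lt continuous_const Complex.continuous_re).inter
    (isOpen_lt Complex.continuous_im.abs Complex.continuous_re)

theorem ofReal_mem_Delta {x : ℝ} (hx : 0 < x) : (x : ℂ) ∈ Delta := by
  simpa [Delta] using hx

theorem ball_ofReal_subset_Delta {x : ℝ} (hx : 0 < x) : ball (x : ℂ) (x / √2) ⊆ Delta := by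
  intro z hz
  have hdist : dist z x ^ 2 < x ^ 2 / 2 := by
    calc dist z x ^ 2 < (x / √2) ^ 2 := by gcongr; exact hz
      _ = x ^ 2 / 2 := by rw [div_pow, sq_sqrt zero_le_two]
  have hcoord : dist z x ^ 2 = (z.re - x) ^ 2 + z.im ^ 2 := by
    rw [Complex.dist_eq, ← Complex.normSq_eq_norm_sq, Complex.normSq_apply]
    simp only [Complex.sub_re, Complex.sub_im, Complex.ofReal_re, Complex.ofReal_im]
    ring
  have hre : 0 < z.re := by nlinarith [sq_nonneg z.im, sq_nonneg z.re]
  exact ⟨hre, abs_lt_of_sq_lt_sq (by nlinarith [sq_nonneg (2 * z.re - x)]) hre.le⟩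

theorem aemeasurable_enorm_iteratedDeriv_ofReal {E : Type*} [NormedAddCommGroup E]
    [NormedSpace ℂ E] [CompleteSpace E] {f : ℂ → E} (hf : DifferentiableOn ℂ f Delta) (n : ℕ) :
    AEMeasurable (fun x : ℝ ↦ ‖iteratedDeriv n f x‖ₑ) (volume.restrict (Ioi 0)) := by
  have hcont : ContinuousOn (iteratedDeriv n f) Delta := by
    rw [iteratedDeriv_eq_iterate]
    exact ((hf.analyticOnNhd isOpen_Delta).iterated_deriv n).continuousOn
  exact (hcont.comp Complex.continuous_ofReal.continuousOn fun x hx ↦ ofReal_mem_Delta hx).enorm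
    |>.aemeasurable measurableSet_Ioi

theorem lintegral_lintegral_ball_discWeight_mul {g : ℂ → ℝ≥0∞}
    (hg : AEMeasurable g (volume.restrict Delta)) :
    ∫⁻ x in Ioi (0 : ℝ), ∫⁻ z in ball (x : ℂ) (x / √2), discWeight x (dist z x) * g z =
      ENNReal.ofReal π * ∫⁻ z in Delta, g z := by
  have hdisc (x : ℝ) (hx : x ∈ Ioi (0 : ℝ)) :
      ∫⁻ z in ball (x : ℂ) (x / √2), discWeight x (dist z x) * g z =
        ∫⁻ z in Delta, discWeight x (dist z x) * g z := by
    have hsupport : Function.support (fun z : ℂ ↦ discWeight x (dist z x) * g z) ⊆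
        ball (x : ℂ) (x / √2) := fun z ↦ not_imp_comm.mp fun hz ↦
      mul_eq_zero_of_left (discWeight_eq_zero_of_notMem_ball hx hz) _
    rw [← setLIntegral_eq_of_support_subset (μ := volume.restrict Delta) hsupport,
      Measure.restrict_restrict_of_subset (ball_ofReal_subset_Delta hx)]
  have hmeas : Measurable fun p : ℝ × ℂ ↦ discWeight p.1 (dist p.2 p.1) := by fun_prop
  rw [setLIntegral_congr_fun measurableSet_Ioi hdisc, lintegral_lintegral_swap
    (hmeas.aemeasurable.mul hg.comp_snd), ← lintegral_const_mul'' _ hg]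
  refine setLIntegral_congr_fun isOpen_Delta.measurableSet fun z hz ↦ ?_
  rw [lintegral_mul_const _ (by fun_prop), lintegral_discWeight_dist hz]

theorem setLIntegral_ball_discWeight_mul_sq_enorm {E : Type*} [NormedAddCommGroup E]
    [InnerProductSpace ℂ E] [CompleteSpace E] {f : ℂ → E} {c : ℂ} {x : ℝ} (hx : 0 < x)
    (hf : DifferentiableOn ℂ f (ball c (x / √2))) :
    ∫⁻ z in ball c (x / √2), discWeight x (dist z c) * ‖f z‖ₑ ^ 2 =
      ∑' n : ℕ, ENNReal.ofReal π * (ENNReal.ofReal (2 ^ n / (2 * n + 1)!) *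
        (ENNReal.ofReal (x ^ (2 * n + 1)) * ‖iteratedDeriv n f c‖ₑ ^ 2)) := by
  rw [setLIntegral_ball_mul_sq_enorm (k := discWeight x) hf (by fun_prop)]
  refine tsum_congr fun n ↦ ?_
  rw [setLIntegral_discWeight_mul_pow hx, ← mul_assoc, ← mul_assoc,
    ← ENNReal.ofReal_mul (by positivity), ← ENNReal.ofReal_mul (by positivity),
    ← ENNReal.ofReal_mul (by positivity)]
  congr 2
  field_simp

end DiscWeight

theorem ahs_identity_general {E : Type*} [NormedAddCommGroup E] [InnerProductSpace ℂ E]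
    [CompleteSpace E] (f : ℂ → E) (hf : DifferentiableOn ℂ f Delta) :
    ∫⁻ z in Delta, ‖f z‖ₑ ^ 2 =
      ∑' n : ℕ, ENNReal.ofReal (2 ^ n / (2 * n + 1)!) *
        ∫⁻ x in Ioi (0 : ℝ), ENNReal.ofReal (x ^ (2 * n + 1)) * ‖iteratedDeriv n f x‖ₑ ^ 2 := by
  have hf_meas : AEMeasurable (fun z ↦ ‖f z‖ₑ ^ 2) (volume.restrict Delta) :=
    (hf.continuousOn.enorm.aemeasurable isOpen_Delta.measurableSet).pow_const 2
  have hterm_meas (n : ℕ) : AEMeasurable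
      (fun x : ℝ ↦ ENNReal.ofReal (x ^ (2 * n + 1)) * ‖iteratedDeriv n f x‖ₑ ^ 2)
      (volume.restrict (Ioi 0)) :=
    (by fun_prop : Measurable fun x : ℝ ↦ ENNReal.ofReal (x ^ (2 * n + 1))).aemeasurable.mul
      ((aemeasurable_enorm_iteratedDeriv_ofReal hf n).pow_const 2)
  refine (ENNReal.mul_right_inj (ENNReal.ofReal_pos.mpr pi_pos).ne' ENNReal.ofReal_ne_top).mp ?_
  rw [← lintegral_lintegral_ball_discWeight_mul hf_meas,
    setLIntegral_congr_fun measurableSet_Ioi fun x hx ↦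
      setLIntegral_ball_discWeight_mul_sq_enorm hx (hf.mono (ball_ofReal_subset_Delta hx)),
    lintegral_tsum fun n ↦ ((hterm_meas n).const_mul _).const_mul _, ← ENNReal.tsum_mul_left]
  refine tsum_congr fun n ↦ ?_
  rw [lintegral_const_mul' _ _ ENNReal.ofReal_ne_top,
    lintegral_const_mul' _ _ ENNReal.ofReal_ne_top]

/-- The Aikawa–Hayashi–Saitoh identity for holomorphic functions on the sector `Δ`,
as an identity in `[0,∞]`. -/
theorem ahs_identity (f : ℂ → ℂ) (hf : DifferentiableOn ℂ f Delta) :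
    ∫⁻ z in Delta, (‖f z‖₊ : ℝ≥0∞) ^ 2 ∂volume =
      ∑' n : ℕ, ENNReal.ofReal ((2 : ℝ) ^ n / (Nat.factorial (2 * n + 1) : ℝ)) *
        ∫⁻ x in Ioi (0 : ℝ),
          ENNReal.ofReal (x ^ (2 * n + 1)) *
            (‖iteratedDeriv n f (x : ℂ)‖₊ : ℝ≥0∞) ^ 2 ∂volume :=
  ahs_identity_general f hf
end

section
/- Let f : ℝ → ℂ be infinitely differentiable on (0,∞) and suppose ∑_{n=0}^∞ (2^n/(2n+1)!) ∫_0^∞ x^{2n+1} |f^{(n)}(x)|² dx < ∞, where f^{(n)} is the n-th derivative of f within (0,∞). Then there exists a holomorphic function F on the sector Δ = {z ∈ ℂ : Re z > 0 and |Im z| < Re z} with F(x) = f(x) for all x ∈ (0,∞), and F satisfies ∫_Δ |F(z)|² dA(z) = ∑_{n=0}^∞ (2^n/(2n+1)!) ∫_0^∞ x^{2n+1} |f^{(n)}(x)|² dx < ∞; in particular F belongs to the Bergman space A²(Δ). -/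
open MeasureTheory Set
open scoped ENNReal NNReal

/-!
The functions `h n u = exp ((n + 1) u) f⁽ⁿ⁾(exp u)` satisfy `(h n)' = (n + 1) h n + h (n + 1)`, so
with `A` the inverse Fourier transform of `h 0`, that of `h n` is `∏ k ∈ [1, n], (-(k + 2πiξ)) • A`.
Since `∑ 2ⁿ / (2n + 1)! ∏ k ∈ [1, n], (k² + t²)` is the integral of `exp (2tθ)` over
`|θ| < π / 4`, Plancherel turns the series into `∫ |A ξ|² W ξ`, where `W ξ` is the integral of
`exp (4πξθ)` over `|θ| < π / 4`. Applying Plancherel again, on each horizontal line, this is the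
squared `L²` norm over the strip `|Im w| < π / 4` of the Fourier–Laplace transform `H` of `A`, a
holomorphic extension of `h 0`. The exponential maps this strip onto the sector, and the
extension of `f` is `z⁻¹ H (log z)`, which has the same `L²` norm as `H`.
-/

open Filter Topology
open scoped FourierTransform SchwartzMap LineDeriv

section SquareIntegrable

variable {α E : Type*} [MeasurableSpace α] {μ : Measure α} [NormedAddCommGroup E] {f : α → E}

lemma eLpNorm_two_pow_two_eq_lintegral : eLpNorm f 2 μ ^ 2 = ∫⁻ x, ‖f x‖ₑ ^ 2 ∂μ := by
  simpa using eLpNorm_nnreal_pow_eq_lintegral (f := f) (μ := μ) (p := 2) two_ne_zero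

lemma memLp_two_of_lintegral_enorm_sq_ne_top (hf : AEStronglyMeasurable f μ)
    (h : ∫⁻ x, ‖f x‖ₑ ^ 2 ∂μ ≠ ⊤) : MemLp f 2 μ :=
  ⟨hf, lt_top_iff_ne_top.2 fun htop => h <| by
    simp [← eLpNorm_two_pow_two_eq_lintegral, htop]⟩

end SquareIntegrable

section FourierL2

variable {V E : Type*} [NormedAddCommGroup V] [InnerProductSpace ℝ V] [FiniteDimensional ℝ V]
  [MeasurableSpace V] [BorelSpace V] [NormedAddCommGroup E]

lemma ae_eq_of_forall_integral_schwartz_smul_eq [NormedSpace ℂ E] [CompleteSpace E]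
    {μ : Measure V} {f g : V → E} (hf : LocallyIntegrable f μ) (hg : LocallyIntegrable g μ)
    (h : ∀ φ : 𝓢(V, ℂ), ∫ x, φ x • f x ∂μ = ∫ x, φ x • g x ∂μ) : f =ᵐ[μ] g := by
  refine ae_eq_of_integral_contDiff_smul_eq hf hg fun q hq hq_supp => ?_
  have hsupp : HasCompactSupport (Complex.ofRealCLM ∘ q) := hq_supp.comp_left rfl
  have hsmooth : ContDiff ℝ (⊤ : ℕ∞) (Complex.ofRealCLM ∘ q) := by fun_prop
  exact h (hsupp.toSchwartzMap hsmooth)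

lemma integrable_schwartz_smul [NormedSpace ℂ E] {f : V → E} (φ : 𝓢(V, ℂ)) (hf : MemLp f 2) :
    Integrable fun x => φ x • f x :=
  memLp_one_iff_integrable.1 (hf.smul (φ.memLp 2))

variable [InnerProductSpace ℂ E] [CompleteSpace E]

lemma integral_schwartz_smul_fourier (φ : 𝓢(V, ℂ)) (f : Lp E 2 (volume : Measure V)) :
    ∫ x, φ x • (𝓕 f : Lp E 2 (volume : Measure V)) x = ∫ x, 𝓕 φ x • f x := by
  simpa only [TemperedDistribution.fourier_apply, Lp.toTemperedDistribution_apply] using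
    congrArg (· φ) (Lp.fourier_toTemperedDistribution_eq f).symm

lemma fourier_toLp_ae_eq {f : V → E} (hf₁ : Integrable f) (hf₂ : MemLp f 2) :
    (𝓕 (hf₂.toLp f) : Lp E 2 (volume : Measure V)) =ᵐ[volume] 𝓕 f := by
  have hcont : Continuous (𝓕 f) := VectorFourier.fourierIntegral_continuous
    Real.continuous_fourierChar (by exact continuous_inner) hf₁
  refine ae_eq_of_forall_integral_schwartz_smul_eq ((Lp.memLp _).locallyIntegrable one_le_two)
    hcont.locallyIntegrable fun φ => ?_
  calc ∫ x, φ x • (𝓕 (hf₂.toLp f) : Lp E 2 (volume : Measure V)) x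
      = ∫ x, 𝓕 φ x • hf₂.toLp f x := integral_schwartz_smul_fourier φ _
    _ = ∫ x, 𝓕 φ x • f x := integral_congr_ae <| by
        filter_upwards [hf₂.coeFn_toLp] with x hx
        rw [hx]
    _ = ∫ x, φ x • 𝓕 f x := by
        have hpair := VectorFourier.integral_fourierIntegral_smul_eq_flip (L := innerₗ V)
          (μ := volume) (ν := volume) Real.continuous_fourierChar continuous_inner φ.integrable hf₁
        rwa [flip_innerₗ] at hpair

lemma lintegral_enorm_sq_fourier {f : V → E} (hf₁ : Integrable f) (hf₂ : MemLp f 2) :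
    ∫⁻ x, ‖𝓕 f x‖ₑ ^ 2 = ∫⁻ x, ‖f x‖ₑ ^ 2 := by
  simp_rw [← eLpNorm_two_pow_two_eq_lintegral]
  rw [← eLpNorm_congr_ae (fourier_toLp_ae_eq hf₁ hf₂), ← Lp.enorm_def, ← Lp.enorm_toLp hf₂]
  exact congrArg (· ^ 2) ((Lp.fourierTransformₗᵢ V E).enorm_map (hf₂.toLp f))

lemma lintegral_enorm_sq_fourierInv_toLp {f : V → E} (hf : MemLp f 2) :
    ∫⁻ x, ‖(𝓕⁻ (hf.toLp f) : Lp E 2 (volume : Measure V)) x‖ₑ ^ 2 = ∫⁻ x, ‖f x‖ₑ ^ 2 := by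
  simp_rw [← eLpNorm_two_pow_two_eq_lintegral]
  rw [← Lp.enorm_def, ← Lp.enorm_toLp hf]
  exact congrArg (· ^ 2) ((Lp.fourierTransformₗᵢ V E).symm.enorm_map (hf.toLp f))

lemma lineDerivOp_toTemperedDistribution_toLp {f f' : ℝ → E} (hf : MemLp f 2) (hf' : MemLp f' 2)
    (hderiv : ∀ x, HasDerivAt f (f' x) x) :
    ∂_{(1 : ℝ)} (Lp.toTemperedDistribution (hf.toLp f)) =
      Lp.toTemperedDistribution (hf'.toLp f') := by
  ext φ
  have hφ (x : ℝ) : HasDerivAt φ ((∂_{(1 : ℝ)} φ) x) x := φ.hasDerivAt x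
  have hint (ψ : 𝓢(ℝ, ℂ)) {g : ℝ → E} (hg : MemLp g 2) :
      Lp.toTemperedDistribution (hg.toLp g) ψ = ∫ x, ψ x • g x := by
    rw [Lp.toTemperedDistribution_apply]
    refine integral_congr_ae ?_
    filter_upwards [hg.coeFn_toLp] with x hx
    rw [hx]
  rw [TemperedDistribution.lineDerivOp_apply_apply, map_neg, hint _ hf, hint _ hf']
  exact (integral_bilinear_hasDerivAt_right_eq_neg_left_of_integrable
    (L := ContinuousLinearMap.lsmul ℝ ℂ) (fun x _ => hφ x) (fun x _ => hderiv x)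
    (integrable_schwartz_smul φ hf') (integrable_schwartz_smul _ hf)
    (integrable_schwartz_smul φ hf)).symm

lemma fourierInv_toLp_deriv_ae_eq {f f' : ℝ → E} (hf : MemLp f 2) (hf' : MemLp f' 2)
    (hderiv : ∀ x, HasDerivAt f (f' x) x) :
    (𝓕⁻ (hf'.toLp f') : Lp E 2 (volume : Measure ℝ)) =ᵐ[volume]
      fun ξ => (-(2 * Real.pi * Complex.I * ξ)) •
        (𝓕⁻ (hf.toLp f) : Lp E 2 (volume : Measure ℝ)) ξ := by
  set A : Lp E 2 (volume : Measure ℝ) := 𝓕⁻ (hf.toLp f)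
  have hloc (g : Lp E 2 (volume : Measure ℝ)) : LocallyIntegrable g :=
    (Lp.memLp g).locallyIntegrable one_le_two
  refine ae_eq_of_forall_integral_schwartz_smul_eq (hloc _)
    ((hloc A).continuous_smul (by fun_prop)) fun φ => ?_
  have htemp : (fun x : ℝ => (inner ℝ x (1 : ℝ) : ℂ)).HasTemperateGrowth := by fun_prop
  calc ∫ x, φ x • (𝓕⁻ (hf'.toLp f') : Lp E 2 (volume : Measure ℝ)) x
      = 𝓕⁻ (∂_{(1 : ℝ)} (Lp.toTemperedDistribution (hf.toLp f))) φ := by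
        rw [lineDerivOp_toTemperedDistribution_toLp hf hf' hderiv,
          Lp.fourierInv_toTemperedDistribution_eq, Lp.toTemperedDistribution_apply]
    _ = -(2 * Real.pi * Complex.I) •
          ∫ x, SchwartzMap.smulLeftCLM ℂ (fun x : ℝ => (inner ℝ x (1 : ℝ) : ℂ)) φ x • A x := by
        rw [TemperedDistribution.fourierInv_lineDerivOp_eq,
          Lp.fourierInv_toTemperedDistribution_eq, _root_.smul_apply,
          TemperedDistribution.smulLeftCLM_apply_apply, Lp.toTemperedDistribution_apply]
    _ = ∫ x, φ x • (-(2 * Real.pi * Complex.I * x)) • A x := by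
        rw [← integral_smul]
        refine integral_congr_ae (.of_forall fun x => ?_)
        simp only [SchwartzMap.smulLeftCLM_apply_apply htemp, smul_smul]
        simp [mul_comm, mul_assoc, mul_left_comm]

lemma fourierInv_toLp_of_hasDerivAt_add {f g : ℝ → E} (c : ℂ) (hf : MemLp f 2) (hg : MemLp g 2)
    (hderiv : ∀ x, HasDerivAt f (c • f x + g x) x) :
    (𝓕⁻ (hg.toLp g) : Lp E 2 (volume : Measure ℝ)) =ᵐ[volume]
      fun ξ => (-(c + 2 * Real.pi * Complex.I * ξ)) •
        (𝓕⁻ (hf.toLp f) : Lp E 2 (volume : Measure ℝ)) ξ := by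
  have hf' : MemLp (fun x => c • f x + g x) 2 := (hf.const_smul c).add hg
  have hsum : hf'.toLp _ = c • hf.toLp f + hg.toLp g := by
    rw [← MemLp.toLp_const_smul, ← MemLp.toLp_add]
    rfl
  have hA := fourierInv_toLp_deriv_ae_eq hf hf' hderiv
  rw [hsum, FourierTransform.fourierInv_add, FourierTransform.fourierInv_smul] at hA
  filter_upwards [hA, Lp.coeFn_add (c • 𝓕⁻ (hf.toLp f)) (𝓕⁻ (hg.toLp g)),
    Lp.coeFn_smul c (𝓕⁻ (hf.toLp f))] with ξ hξ hadd hsmul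
  rw [hadd, Pi.add_apply, hsmul, Pi.smul_apply] at hξ
  rw [eq_sub_of_add_eq' hξ, ← sub_smul]
  congr 1
  ring

end FourierL2

section HolomorphicIntegral

variable {α 𝕜 E : Type*} [MeasurableSpace α] {μ : Measure α} [NormedAddCommGroup E]

lemma aestronglyMeasurable_deriv_of_eventually [NontriviallyNormedField 𝕜] [NormedSpace 𝕜 E]
    {F : 𝕜 → α → E} {z₀ : 𝕜} (hF_meas : ∀ᶠ z in 𝓝 z₀, AEStronglyMeasurable (F z) μ)
    (hF_diff : ∀ᵐ a ∂μ, DifferentiableAt 𝕜 (F · a) z₀) :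
    AEStronglyMeasurable (fun a => deriv (F · a) z₀) μ := by
  obtain ⟨z, hz, hz_meas⟩ := exists_seq_forall_of_frequently
    (hF_meas.filter_mono nhdsWithin_le_nhds : ∀ᶠ z in 𝓝[≠] z₀, _).frequently
  refine aestronglyMeasurable_of_tendsto_ae atTop
    (f := fun n a => slope (F · a) z₀ (z n)) (fun n => ?_) ?_
  · simp only [slope_def_module]
    exact ((hz_meas n).sub hF_meas.self_of_nhds).const_smul _
  · filter_upwards [hF_diff] with a ha
    exact ha.hasDerivAt.tendsto_slope.comp hz

variable [NormedSpace ℂ E] {U : Set ℂ} {F : ℂ → α → E} {bound : α → ℝ}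

/-- Domination of `F` alone suffices: Cauchy's estimate bounds the derivatives. -/
lemma differentiableOn_integral_of_dominated (hU : IsOpen U)
    (hF_meas : ∀ z ∈ U, AEStronglyMeasurable (F z) μ)
    (hF_bound : ∀ᵐ a ∂μ, ∀ z ∈ U, ‖F z a‖ ≤ bound a) (hbound : Integrable bound μ)
    (hF_diff : ∀ᵐ a ∂μ, DifferentiableOn ℂ (F · a) U) :
    DifferentiableOn ℂ (fun z => ∫ a, F z a ∂μ) U := by
  intro z₀ hz₀
  obtain ⟨r, hr, hball⟩ : ∃ r > 0, Metric.ball z₀ (r + r) ⊆ U := by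
    obtain ⟨ε, hε, hsub⟩ := Metric.isOpen_iff.1 hU z₀ hz₀
    exact ⟨ε / 2, half_pos hε, by rwa [add_halves]⟩
  have hclosedBall (z : ℂ) (hz : z ∈ Metric.ball z₀ r) : Metric.closedBall z r ⊆ U :=
    (Metric.closedBall_subset_ball' (by
      have := Metric.mem_ball.1 hz
      linarith)).trans hball
  have hcauchy : ∀ᵐ a ∂μ, ∀ z ∈ Metric.ball z₀ r, ‖deriv (F · a) z‖ ≤ bound a / r := by
    filter_upwards [hF_bound, hF_diff] with a hle hdiff z hz
    exact Complex.norm_deriv_le_of_forall_mem_sphere_norm_le hr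
      (hdiff.diffContOnCl_ball (hclosedBall z hz))
      fun w hw => hle w (hclosedBall z hz (Metric.sphere_subset_closedBall hw))
  have hmeas : ∀ᶠ z in 𝓝 z₀, AEStronglyMeasurable (F z) μ :=
    eventually_of_mem (hU.mem_nhds hz₀) hF_meas
  refine (hasDerivAt_integral_of_dominated_loc_of_deriv_le (Metric.ball_mem_nhds z₀ hr)
    hmeas ?_ (aestronglyMeasurable_deriv_of_eventually hmeas ?_) hcauchy
    (hbound.div_const r) ?_).2.differentiableAt.differentiableWithinAt
  · exact hbound.mono' (hF_meas z₀ hz₀) (hF_bound.mono fun a ha => ha z₀ hz₀)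
  · filter_upwards [hF_diff] with a ha
    exact ha.differentiableAt (hU.mem_nhds hz₀)
  · filter_upwards [hF_diff] with a ha z hz
    exact (ha.differentiableAt (hU.mem_nhds
      (hclosedBall z hz (Metric.mem_closedBall_self hr.le)))).hasDerivAt

end HolomorphicIntegral

section Strip

/-- The open horizontal strip of half-width `α` about the real axis. -/
def horizontalStrip (α : ℝ) : Set ℂ := {w : ℂ | |w.im| < α}

/-- The multiplier on the frequency side of Plancherel's formula for holomorphic functions on
the strip `|Im w| < α`: the total contribution of the frequency `ξ` to their `L²` norm. -/
noncomputable def stripWeight (α ξ : ℝ) : ℝ≥0∞ :=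
  ∫⁻ θ in Ioo (-α) α, ENNReal.ofReal (Real.exp (4 * Real.pi * ξ * θ))

/-- The Fourier–Laplace transform of `A`, i.e. its Fourier transform evaluated at complex
arguments. -/
noncomputable def fourierLaplace {E : Type*} [NormedAddCommGroup E] [NormedSpace ℂ E]
    (A : ℝ → E) (w : ℂ) : E :=
  ∫ ξ : ℝ, Complex.exp (-(2 * Real.pi * Complex.I * ξ) * w) • A ξ

variable {α a : ℝ}

lemma isOpen_horizontalStrip (α : ℝ) : IsOpen (horizontalStrip α) :=
  isOpen_lt (by fun_prop) continuous_const

lemma lintegral_horizontalStrip {g : ℂ → ℝ≥0∞}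
    (hg : AEMeasurable g (volume.restrict (horizontalStrip α))) :
    ∫⁻ w in horizontalStrip α, g w =
      ∫⁻ θ in Ioo (-α) α, ∫⁻ u : ℝ, g (u + θ * Complex.I) := by
  set e := Complex.measurableEquivRealProd.symm
  have he : MeasurePreserving e := Complex.volume_preserving_equiv_real_prod.symm
  have he_apply (p : ℝ × ℝ) : e p = p.1 + p.2 * Complex.I := Complex.mk_eq_add_mul_I _ _
  have hpre : e ⁻¹' horizontalStrip α = univ ×ˢ Ioo (-α) α := by
    ext p
    simp [he_apply, horizontalStrip, abs_lt]
  have hge : AEMeasurable (g ∘ e) ((volume.prod volume).restrict (univ ×ˢ Ioo (-α) α)) := by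
    rw [← hpre]
    exact hg.comp_quasiMeasurePreserving
      (he.restrict_preimage (isOpen_horizontalStrip α).measurableSet).quasiMeasurePreserving
  calc ∫⁻ w in horizontalStrip α, g w
      = ∫⁻ p in e ⁻¹' horizontalStrip α, g (e p) :=
        (he.setLIntegral_comp_preimage_emb e.measurableEmbedding g _).symm
    _ = ∫⁻ θ in Ioo (-α) α, ∫⁻ u in univ, g (e (u, θ)) := by
        rw [hpre]
        exact setLIntegral_prod_symm (g ∘ e) hge
    _ = ∫⁻ θ in Ioo (-α) α, ∫⁻ u : ℝ, g (u + θ * Complex.I) := by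
        simp only [he_apply, setLIntegral_univ]

lemma ofReal_mul_ofReal_exp_le_stripWeight (ha : 0 ≤ a) (ξ : ℝ) :
    ENNReal.ofReal (α - a) * ENNReal.ofReal (Real.exp (4 * Real.pi * (a * |ξ|))) ≤
      stripWeight α ξ := by
  obtain ⟨s, hs, hsub, hvol, hle⟩ : ∃ s : Set ℝ, MeasurableSet s ∧ s ⊆ Ioo (-α) α ∧
      volume s = ENNReal.ofReal (α - a) ∧ ∀ θ ∈ s, a * |ξ| ≤ ξ * θ := by
    rcases le_total 0 ξ with hξ | hξ
    · refine ⟨Ioo a α, measurableSet_Ioo, fun θ hθ => ⟨?_, hθ.2⟩, Real.volume_Ioo, fun θ hθ => ?_⟩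
      · linarith [hθ.1, hθ.2]
      · rw [abs_of_nonneg hξ, mul_comm]
        exact mul_le_mul_of_nonneg_left hθ.1.le hξ
    · refine ⟨Ioo (-α) (-a), measurableSet_Ioo, fun θ hθ => ⟨hθ.1, ?_⟩, ?_, fun θ hθ => ?_⟩
      · linarith [hθ.1, hθ.2]
      · rw [Real.volume_Ioo, neg_sub_neg]
      · rw [abs_of_nonpos hξ, mul_neg, ← neg_mul, mul_comm]
        exact mul_le_mul_of_nonpos_left hθ.2.le hξ
  calc ENNReal.ofReal (α - a) * ENNReal.ofReal (Real.exp (4 * Real.pi * (a * |ξ|)))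
      = ∫⁻ _ in s, ENNReal.ofReal (Real.exp (4 * Real.pi * (a * |ξ|))) := by
        rw [setLIntegral_const, hvol, mul_comm]
    _ ≤ ∫⁻ θ in s, ENNReal.ofReal (Real.exp (4 * Real.pi * ξ * θ)) := by
        refine setLIntegral_mono' hs fun θ hθ => ?_
        rw [mul_assoc _ ξ]
        exact ENNReal.ofReal_le_ofReal (Real.exp_le_exp.2
          (mul_le_mul_of_nonneg_left (hle θ hθ) (by positivity)))
    _ ≤ stripWeight α ξ := lintegral_mono_set hsub

lemma integrable_exp_neg_mul_abs {b : ℝ} (hb : 0 < b) :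
    Integrable fun x : ℝ => Real.exp (-b * |x|) := by
  rw [← integrableOn_univ, ← Iic_union_Ioi (a := (0 : ℝ)), integrableOn_union]
  constructor
  · refine (integrableOn_exp_mul_Iic hb 0).congr_fun (fun x hx => ?_) measurableSet_Iic
    simp only [abs_of_nonpos (mem_Iic.1 hx), neg_mul_neg]
  · refine (exp_neg_integrableOn_Ioi 0 hb).congr_fun (fun x hx => ?_) measurableSet_Ioi
    simp only [abs_of_pos (mem_Ioi.1 hx)]

lemma memLp_two_exp_neg_mul_abs {b : ℝ} (hb : 0 < b) :
    MemLp (fun x : ℝ => Real.exp (-b * |x|)) 2 := by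
  rw [memLp_two_iff_integrable_sq (by fun_prop)]
  convert integrable_exp_neg_mul_abs (mul_pos two_pos hb) using 2 with x
  rw [← Real.exp_nat_mul]
  push_cast
  ring_nf

variable {E : Type*} [NormedAddCommGroup E] [NormedSpace ℂ E] {A : ℝ → E}

lemma enorm_exp_smul_sq (x : ℝ) (v : E) :
    ‖Real.exp x • v‖ₑ ^ 2 = ‖v‖ₑ ^ 2 * ENNReal.ofReal (Real.exp (2 * x)) := by
  rw [enorm_smul, mul_pow, Real.enorm_of_nonneg (Real.exp_pos x).le,
    ← ENNReal.ofReal_pow (Real.exp_pos x).le, ← Real.exp_nat_mul, mul_comm, Nat.cast_ofNat]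

lemma memLp_two_exp_abs_smul (hA : AEStronglyMeasurable A)
    (hfin : ∫⁻ ξ, ‖A ξ‖ₑ ^ 2 * stripWeight α ξ ≠ ⊤) (ha₀ : 0 ≤ a) (ha : a < α) :
    MemLp (fun ξ : ℝ => Real.exp (2 * Real.pi * a * |ξ|) • A ξ) 2 := by
  refine memLp_two_of_lintegral_enorm_sq_ne_top ?_ fun htop => hfin ?_
  · exact (by fun_prop : Continuous fun ξ : ℝ => Real.exp (2 * Real.pi * a * |ξ|))
      |>.aestronglyMeasurable.smul hA
  rw [← top_le_iff]
  have hpos : ENNReal.ofReal (α - a) ≠ 0 := by simpa using ha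
  calc ⊤ = ENNReal.ofReal (α - a) *
        ∫⁻ ξ : ℝ, ‖Real.exp (2 * Real.pi * a * |ξ|) • A ξ‖ₑ ^ 2 := by
        rw [htop, ENNReal.mul_top hpos]
    _ = ∫⁻ ξ : ℝ, ‖A ξ‖ₑ ^ 2 * (ENNReal.ofReal (α - a) *
          ENNReal.ofReal (Real.exp (4 * Real.pi * (a * |ξ|)))) := by
        rw [← lintegral_const_mul' _ _ ENNReal.ofReal_ne_top]
        refine lintegral_congr fun ξ => ?_
        rw [enorm_exp_smul_sq, mul_left_comm]
        ring_nf
    _ ≤ ∫⁻ ξ, ‖A ξ‖ₑ ^ 2 * stripWeight α ξ := by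
        gcongr with ξ
        exact ofReal_mul_ofReal_exp_le_stripWeight ha₀ ξ

lemma integrable_exp_abs_smul (hA : AEStronglyMeasurable A)
    (hfin : ∫⁻ ξ, ‖A ξ‖ₑ ^ 2 * stripWeight α ξ ≠ ⊤) (ha₀ : 0 ≤ a) (ha : a < α) :
    Integrable fun ξ : ℝ => Real.exp (2 * Real.pi * a * |ξ|) • A ξ := by
  obtain ⟨b, hab, hb⟩ := exists_between ha
  have hdecay : MemLp (fun ξ : ℝ => Real.exp (-(2 * Real.pi * (b - a)) * |ξ|)) 2 :=
    memLp_two_exp_neg_mul_abs (mul_pos Real.two_pi_pos (sub_pos.2 hab))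
  convert memLp_one_iff_integrable.1
    ((memLp_two_exp_abs_smul hA hfin (ha₀.trans hab.le) hb).smul hdecay) using 2 with ξ
  rw [Pi.smul_apply', smul_smul, ← Real.exp_add]
  ring_nf

lemma norm_cexp_smul_le {w : ℂ} (hw : |w.im| ≤ a) (ξ : ℝ) (v : E) :
    ‖Complex.exp (-(2 * Real.pi * Complex.I * ξ) * w) • v‖ ≤
      ‖Real.exp (2 * Real.pi * a * |ξ|) • v‖ := by
  rw [norm_smul, norm_smul, Complex.norm_exp, Real.norm_of_nonneg (Real.exp_pos _).le]
  gcongr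
  calc (-(2 * Real.pi * Complex.I * ξ) * w).re = 2 * Real.pi * (w.im * ξ) := by
        simp only [Complex.neg_re, Complex.neg_im, Complex.mul_re, Complex.mul_im, Complex.I_re,
          Complex.I_im, Complex.ofReal_re, Complex.ofReal_im, Complex.re_ofNat, Complex.im_ofNat]
        ring
    _ ≤ 2 * Real.pi * (a * |ξ|) := by
        refine mul_le_mul_of_nonneg_left ?_ Real.two_pi_pos.le
        calc w.im * ξ ≤ |w.im| * |ξ| := (le_abs_self _).trans (abs_mul _ _).le
          _ ≤ a * |ξ| := mul_le_mul_of_nonneg_right hw (abs_nonneg ξ)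
    _ = 2 * Real.pi * a * |ξ| := by ring

lemma differentiableOn_fourierLaplace (hA : AEStronglyMeasurable A)
    (hfin : ∫⁻ ξ, ‖A ξ‖ₑ ^ 2 * stripWeight α ξ ≠ ⊤) :
    DifferentiableOn ℂ (fourierLaplace A) (horizontalStrip α) := by
  intro w hw
  obtain ⟨a, hwa, ha⟩ := exists_between (show |w.im| < α from hw)
  have hdiff : DifferentiableOn ℂ (fourierLaplace A) (horizontalStrip a) := by
    refine differentiableOn_integral_of_dominated (isOpen_horizontalStrip a)
      (fun z _ => .smul (by fun_prop) hA)
      (.of_forall fun ξ z hz => norm_cexp_smul_le (le_of_lt hz) ξ (A ξ))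
      (integrable_exp_abs_smul hA hfin ((abs_nonneg _).trans hwa.le) ha).norm
      (.of_forall fun ξ => ?_)
    fun_prop
  exact (hdiff.differentiableAt
    ((isOpen_horizontalStrip a).mem_nhds hwa)).differentiableWithinAt

lemma cexp_horizontal_smul (ξ u θ : ℝ) (v : E) :
    Complex.exp (-(2 * Real.pi * Complex.I * ξ) * (u + θ * Complex.I)) • v =
      Complex.exp ((-2 * Real.pi * inner ℝ ξ u : ℝ) * Complex.I) •
        Real.exp (2 * Real.pi * θ * ξ) • v := by
  rw [← Complex.coe_smul, smul_smul, Complex.ofReal_exp, ← Complex.exp_add]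
  congr 2
  simp only [RCLike.inner_apply, Real.ringHom_apply]
  push_cast
  linear_combination (-2 * Real.pi * ξ * θ : ℂ) * Complex.I_sq

lemma fourierLaplace_eq_fourier (A : ℝ → E) (u θ : ℝ) :
    fourierLaplace A (u + θ * Complex.I) =
      𝓕 (fun ξ : ℝ => Real.exp (2 * Real.pi * θ * ξ) • A ξ) u := by
  simp only [fourierLaplace, cexp_horizontal_smul, Real.fourier_eq']

end Strip

section PaleyWiener

variable {E : Type*} [NormedAddCommGroup E] [InnerProductSpace ℂ E] [CompleteSpace E]
  {α : ℝ} {A : ℝ → E}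

lemma lintegral_enorm_sq_fourierLaplace_line (hA : AEStronglyMeasurable A)
    (hfin : ∫⁻ ξ, ‖A ξ‖ₑ ^ 2 * stripWeight α ξ ≠ ⊤) {θ : ℝ} (hθ : |θ| < α) :
    ∫⁻ u : ℝ, ‖fourierLaplace A (u + θ * Complex.I)‖ₑ ^ 2 =
      ∫⁻ ξ, ‖A ξ‖ₑ ^ 2 * ENNReal.ofReal (Real.exp (4 * Real.pi * ξ * θ)) := by
  have hmeas : AEStronglyMeasurable (fun ξ : ℝ => Real.exp (2 * Real.pi * θ * ξ) • A ξ) :=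
    (by fun_prop : Continuous fun ξ : ℝ => Real.exp (2 * Real.pi * θ * ξ))
      |>.aestronglyMeasurable.smul hA
  have hle (ξ : ℝ) : ‖Real.exp (2 * Real.pi * θ * ξ) • A ξ‖ ≤
      ‖Real.exp (2 * Real.pi * |θ| * |ξ|) • A ξ‖ := by
    simp only [norm_smul, Real.norm_of_nonneg (Real.exp_pos _).le, mul_assoc, ← abs_mul]
    gcongr
    exact le_abs_self _
  have hint := (integrable_exp_abs_smul hA hfin (abs_nonneg θ) hθ).mono hmeas (.of_forall hle)
  have hmem := (memLp_two_exp_abs_smul hA hfin (abs_nonneg θ) hθ).mono hmeas (.of_forall hle)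
  simp_rw [fourierLaplace_eq_fourier]
  rw [lintegral_enorm_sq_fourier hint hmem]
  refine lintegral_congr fun ξ => ?_
  rw [enorm_exp_smul_sq]
  ring_nf

lemma lintegral_enorm_sq_fourierLaplace (hA : AEStronglyMeasurable A)
    (hfin : ∫⁻ ξ, ‖A ξ‖ₑ ^ 2 * stripWeight α ξ ≠ ⊤) :
    ∫⁻ w in horizontalStrip α, ‖fourierLaplace A w‖ₑ ^ 2 = ∫⁻ ξ, ‖A ξ‖ₑ ^ 2 * stripWeight α ξ := by
  have hmeas : AEMeasurable (fun w => ‖fourierLaplace A w‖ₑ ^ 2)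
      (volume.restrict (horizontalStrip α)) :=
    ((differentiableOn_fourierLaplace hA hfin).continuousOn.enorm.aemeasurable
      (isOpen_horizontalStrip α).measurableSet).pow_const 2
  calc ∫⁻ w in horizontalStrip α, ‖fourierLaplace A w‖ₑ ^ 2
      = ∫⁻ θ in Ioo (-α) α, ∫⁻ u : ℝ, ‖fourierLaplace A (u + θ * Complex.I)‖ₑ ^ 2 :=
        lintegral_horizontalStrip hmeas
    _ = ∫⁻ θ in Ioo (-α) α, ∫⁻ ξ,
          ‖A ξ‖ₑ ^ 2 * ENNReal.ofReal (Real.exp (4 * Real.pi * ξ * θ)) :=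
        setLIntegral_congr_fun measurableSet_Ioo fun θ hθ =>
          lintegral_enorm_sq_fourierLaplace_line hA hfin (abs_lt.2 hθ)
    _ = ∫⁻ ξ, ∫⁻ θ in Ioo (-α) α,
          ‖A ξ‖ₑ ^ 2 * ENNReal.ofReal (Real.exp (4 * Real.pi * ξ * θ)) := by
        have hexp : Measurable fun p : ℝ × ℝ =>
            ENNReal.ofReal (Real.exp (4 * Real.pi * p.2 * p.1)) := by fun_prop
        exact lintegral_lintegral_swap ((hA.enorm.pow_const 2 |>.comp_quasiMeasurePreserving
          Measure.quasiMeasurePreserving_snd).mul hexp.aemeasurable)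
    _ = ∫⁻ ξ, ‖A ξ‖ₑ ^ 2 * stripWeight α ξ :=
        lintegral_congr fun ξ => lintegral_const_mul _ (by fun_prop)

end PaleyWiener

section Sector

variable {α : ℝ}

lemma det_restrictScalars_toSpanSingleton (c : ℂ) :
    ((ContinuousLinearMap.toSpanSingleton ℂ c).restrictScalars ℝ).det = ‖c‖ ^ 2 := by
  have hmul : (((ContinuousLinearMap.toSpanSingleton ℂ c).restrictScalars ℝ : ℂ →L[ℝ] ℂ) :
      ℂ →ₗ[ℝ] ℂ) = LinearMap.mulLeft ℝ c := by
    ext w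
    exact mul_comm w c
  rw [ContinuousLinearMap.det, hmul, ← Complex.normSq_eq_norm_sq, ← Algebra.norm_complex_apply,
    Algebra.norm_apply]
  rfl

lemma lintegral_image_eq_lintegral_enorm_deriv_sq_mul {s : Set ℂ} {f f' : ℂ → ℂ}
    (hs : MeasurableSet s) (hf' : ∀ w ∈ s, HasDerivWithinAt f (f' w) s w) (hf : InjOn f s)
    (g : ℂ → ℝ≥0∞) :
    ∫⁻ z in f '' s, g z = ∫⁻ w in s, ‖f' w‖ₑ ^ 2 * g (f w) := by
  rw [lintegral_image_eq_lintegral_abs_det_fderiv_mul volume hs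
    (fun w hw => (hf' w hw).hasFDerivWithinAt.restrictScalars ℝ) hf]
  simp_rw [det_restrictScalars_toSpanSingleton, abs_of_nonneg (sq_nonneg ‖_‖),
    ENNReal.ofReal_pow (norm_nonneg _), ofReal_norm]

lemma Delta_subset_slitPlane : Delta ⊆ Complex.slitPlane := fun _ hz => Or.inl hz.1

lemma mem_Delta_iff_abs_arg_lt {z : ℂ} (hz : z ≠ 0) : z ∈ Delta ↔ |z.arg| < Real.pi / 4 := by
  have abs_arg_lt_iff (hre : 0 < z.re) : |z.arg| < Real.pi / 4 ↔ |z.im| < z.re := by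
    have harg := abs_lt.1 (Complex.abs_arg_lt_pi_div_two_iff.2 (Or.inl hre))
    rw [← Real.arctan_tan harg.1 harg.2, Complex.tan_arg, abs_lt, ← Real.arctan_one,
      ← Real.arctan_neg, Real.arctan_lt_arctan_iff, Real.arctan_lt_arctan_iff, ← abs_lt, abs_div,
      abs_of_pos hre, div_lt_one hre]
  constructor
  · exact fun hD => (abs_arg_lt_iff hD.1).2 hD.2
  · intro harg
    have hre : 0 < z.re :=
      (Complex.abs_arg_lt_pi_div_two_iff.1 (by linarith [Real.pi_pos])).resolve_right hz
    exact ⟨hre, (abs_arg_lt_iff hre).1 harg⟩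

lemma log_mem_horizontalStrip {z : ℂ} (hz : z ∈ Delta) :
    Complex.log z ∈ horizontalStrip (Real.pi / 4) := by
  rw [horizontalStrip, mem_ofPred_eq, Complex.log_im]
  exact (mem_Delta_iff_abs_arg_lt (Complex.slitPlane_ne_zero (Delta_subset_slitPlane hz))).1 hz

lemma log_exp_of_mem_horizontalStrip (hα : α ≤ Real.pi) {w : ℂ} (hw : w ∈ horizontalStrip α) :
    Complex.log (Complex.exp w) = w := by
  have hlt := abs_lt.1 (show |w.im| < α from hw)
  exact Complex.log_exp (by linarith) (by linarith)

lemma exp_image_horizontalStrip : Complex.exp '' horizontalStrip (Real.pi / 4) = Delta := by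
  have hπ : Real.pi / 4 ≤ Real.pi := by linarith [Real.pi_pos]
  ext z
  constructor
  · rintro ⟨w, hw, rfl⟩
    rw [mem_Delta_iff_abs_arg_lt (Complex.exp_ne_zero w), ← Complex.log_im,
      log_exp_of_mem_horizontalStrip hπ hw]
    exact hw
  · exact fun hz => ⟨Complex.log z, log_mem_horizontalStrip hz,
      Complex.exp_log (Complex.slitPlane_ne_zero (Delta_subset_slitPlane hz))⟩

lemma injOn_exp_horizontalStrip (hα : α ≤ Real.pi) : InjOn Complex.exp (horizontalStrip α) :=
  LeftInvOn.injOn (f₁' := Complex.log) fun _ hw => log_exp_of_mem_horizontalStrip hα hw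

variable {E : Type*} [NormedAddCommGroup E] [NormedSpace ℂ E] {H : ℂ → E}

lemma differentiableOn_inv_smul_comp_log
    (hH : DifferentiableOn ℂ H (horizontalStrip (Real.pi / 4))) :
    DifferentiableOn ℂ (fun z => z⁻¹ • H (Complex.log z)) Delta := by
  have hlog : DifferentiableOn ℂ Complex.log Delta := fun z hz =>
    (Complex.differentiableAt_log (Delta_subset_slitPlane hz)).differentiableWithinAt
  exact (differentiableOn_inv.mono fun z hz =>
    Complex.slitPlane_ne_zero (Delta_subset_slitPlane hz)).smul
      (hH.comp hlog fun z hz => log_mem_horizontalStrip hz)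

lemma lintegral_enorm_sq_inv_smul_comp_log (hα : α ≤ Real.pi) (H : ℂ → E) :
    ∫⁻ z in Complex.exp '' horizontalStrip α, ‖z⁻¹ • H (Complex.log z)‖ₑ ^ 2 =
      ∫⁻ w in horizontalStrip α, ‖H w‖ₑ ^ 2 := by
  have hmeas := (isOpen_horizontalStrip α).measurableSet
  rw [lintegral_image_eq_lintegral_enorm_deriv_sq_mul hmeas
    (fun w _ => (Complex.hasDerivAt_exp w).hasDerivWithinAt) (injOn_exp_horizontalStrip hα)]
  refine setLIntegral_congr_fun hmeas fun w hw => ?_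
  rw [log_exp_of_mem_horizontalStrip hα hw, ← mul_pow, ← enorm_smul,
    smul_inv_smul₀ (Complex.exp_ne_zero w)]

end Sector

section Weight

/-- The multiplier by which the `n`-th term of the Aikawa–Hayashi–Saitoh series acts on the
frequency side, as a function of `t = 2πξ`. -/
noncomputable def ahsMultiplier (t : ℝ) (n : ℕ) : ℝ :=
  2 ^ n / (2 * n + 1).factorial * ∏ k ∈ Finset.range n, (((k : ℝ) + 1) ^ 2 + t ^ 2)

/-- The integrals through which `∑ ahsMultiplier t n` telescopes; at `n = 0` this is half the
integral of `exp (2tθ)` over `|θ| < π / 4`. -/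
noncomputable def coshSinIntegral (t : ℝ) (n : ℕ) : ℝ :=
  ∫ θ in (0 : ℝ)..(Real.pi / 4), Real.cosh (2 * t * θ) * (1 - Real.sin (2 * θ)) ^ n

lemma ahsMultiplier_pos (t : ℝ) (n : ℕ) : 0 < ahsMultiplier t n := by
  unfold ahsMultiplier
  positivity

lemma ahsMultiplier_zero (t : ℝ) : ahsMultiplier t 0 = 1 := by simp [ahsMultiplier]

lemma ahsMultiplier_succ (t : ℝ) (n : ℕ) :
    ahsMultiplier t (n + 1) =
      ((n + 1 : ℝ) ^ 2 + t ^ 2) / ((n + 1) * (2 * n + 3)) * ahsMultiplier t n := by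
  rw [ahsMultiplier, ahsMultiplier, Finset.prod_range_succ,
    show 2 * (n + 1) + 1 = 2 * n + 1 + 1 + 1 by ring, Nat.factorial_succ, Nat.factorial_succ]
  push_cast
  field_simp
  ring

lemma hasDerivAt_coshSin_primitive (t : ℝ) (n : ℕ) (θ : ℝ) :
    HasDerivAt (fun θ : ℝ =>
      t / 2 * (Real.sinh (2 * t * θ) * (1 - Real.sin (2 * θ)) ^ (n + 1)) +
        (n + 1 : ℝ) / 2 *
          (Real.cosh (2 * t * θ) * (Real.cos (2 * θ) * (1 - Real.sin (2 * θ)) ^ n)))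
      ((t ^ 2 + (n + 1 : ℝ) ^ 2) * (Real.cosh (2 * t * θ) * (1 - Real.sin (2 * θ)) ^ (n + 1)) -
        (n + 1 : ℝ) * (2 * n + 1) * (Real.cosh (2 * t * θ) * (1 - Real.sin (2 * θ)) ^ n)) θ := by
  have hlin (c : ℝ) : HasDerivAt (fun θ : ℝ => c * θ) c θ := by
    simpa using (hasDerivAt_id θ).const_mul c
  have hsin := (hlin 2).sin.const_sub 1
  refine ((((hlin (2 * t)).sinh.mul (hsin.pow (n + 1))).const_mul (t / 2)).add
    (((hlin (2 * t)).cosh.mul ((hlin 2).cos.mul (hsin.pow n))).const_mul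
      ((n + 1 : ℝ) / 2))).congr_deriv ?_
  simp only [Pi.pow_apply, Pi.mul_apply, Nat.add_sub_cancel]
  rcases n with _ | n
  · push_cast
    ring
  · have hcos : Real.cos (2 * θ) ^ 2 = (1 - Real.sin (2 * θ)) * (1 + Real.sin (2 * θ)) := by
      linear_combination Real.sin_sq_add_cos_sq (2 * θ)
    simp only [Nat.add_sub_cancel]
    push_cast
    linear_combination (-(n + 1 + 1 : ℝ) * (n + 1) * Real.cosh (2 * t * θ) *
      (1 - Real.sin (2 * θ)) ^ n) * hcos

lemma coshSinIntegral_succ (t : ℝ) (n : ℕ) :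
    (t ^ 2 + (n + 1 : ℝ) ^ 2) * coshSinIntegral t (n + 1) =
      (n + 1 : ℝ) * (2 * n + 1) * coshSinIntegral t n - (n + 1 : ℝ) / 2 := by
  have hint (m : ℕ) : IntervalIntegrable
      (fun θ => Real.cosh (2 * t * θ) * (1 - Real.sin (2 * θ)) ^ m) volume 0 (Real.pi / 4) :=
    Continuous.intervalIntegrable (by fun_prop) _ _
  have hftc := intervalIntegral.integral_eq_sub_of_hasDerivAt
    (fun θ _ => hasDerivAt_coshSin_primitive t n θ)
    (((hint (n + 1)).const_mul _).sub ((hint n).const_mul _))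
  rw [intervalIntegral.integral_sub ((hint (n + 1)).const_mul _) ((hint n).const_mul _),
    intervalIntegral.integral_const_mul, intervalIntegral.integral_const_mul,
    show 2 * (Real.pi / 4) = Real.pi / 2 by ring] at hftc
  simp only [Real.sin_pi_div_two, Real.cos_pi_div_two, sub_self, mul_zero, Real.sin_zero,
    Real.cos_zero, Real.sinh_zero, Real.cosh_zero, sub_zero, one_pow, zero_pow n.succ_ne_zero,
    zero_mul, zero_add, zero_sub, mul_one] at hftc
  unfold coshSinIntegral
  linarith

lemma coshSinIntegral_nonneg (t : ℝ) (n : ℕ) : 0 ≤ coshSinIntegral t n :=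
  intervalIntegral.integral_nonneg (by positivity) fun θ _ =>
    mul_nonneg (Real.cosh_pos _).le (pow_nonneg (sub_nonneg.2 (Real.sin_le_one _)) n)

lemma coshSinIntegral_le (t : ℝ) (n : ℕ) : coshSinIntegral t n ≤ coshSinIntegral t 0 := by
  refine intervalIntegral.integral_mono_on (by positivity)
    (Continuous.intervalIntegrable (by fun_prop) _ _)
    (Continuous.intervalIntegrable (by fun_prop) _ _) fun θ hθ => ?_
  have hsin : 0 ≤ Real.sin (2 * θ) :=
    Real.sin_nonneg_of_nonneg_of_le_pi (by linarith [hθ.1]) (by linarith [hθ.2, Real.pi_pos])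
  rw [pow_zero]
  exact mul_le_mul_of_nonneg_left
    (pow_le_one₀ (sub_nonneg.2 (Real.sin_le_one _)) (by linarith)) (Real.cosh_pos _).le

lemma sum_range_ahsMultiplier (t : ℝ) (n : ℕ) :
    ∑ k ∈ Finset.range n, ahsMultiplier t k =
      2 * coshSinIntegral t 0 -
        (2 * n + 1 : ℝ) * ahsMultiplier t n * (2 * coshSinIntegral t n) := by
  induction n with
  | zero => simp [ahsMultiplier_zero]
  | succ n ih =>
    rw [Finset.sum_range_succ, ih, ahsMultiplier_succ]
    push_cast
    field_simp
    linear_combination (2 * (2 * n + 3) * ahsMultiplier t n) * coshSinIntegral_succ t n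

lemma tendsto_mul_ahsMultiplier (t : ℝ) :
    Tendsto (fun n : ℕ => (2 * n + 1 : ℝ) * ahsMultiplier t n) atTop (𝓝 0) := by
  have hpos (n : ℕ) : 0 < (2 * n + 1 : ℝ) * ahsMultiplier t n :=
    mul_pos (by positivity) (ahsMultiplier_pos t n)
  have hratio (n : ℕ) :
      ‖(2 * ((n + 1 : ℕ) : ℝ) + 1) * ahsMultiplier t (n + 1)‖ /
          ‖(2 * n + 1 : ℝ) * ahsMultiplier t n‖ =
        (1 + t ^ 2 * (1 / (n + 1 : ℝ)) * (1 / (n + 1 : ℝ))) / (2 - 1 / (n + 1 : ℝ)) := by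
    have hM := (ahsMultiplier_pos t n).ne'
    have hden : (2 - 1 / (n + 1 : ℝ)) = (2 * n + 1) / (n + 1) := by
      field_simp
      ring
    rw [Real.norm_of_nonneg (hpos _).le, Real.norm_of_nonneg (hpos _).le, ahsMultiplier_succ, hden]
    push_cast
    field_simp
    ring
  have hlim : Tendsto (fun n : ℕ =>
      (1 + t ^ 2 * (1 / (n + 1 : ℝ)) * (1 / (n + 1 : ℝ))) / (2 - 1 / (n + 1 : ℝ)))
      atTop (𝓝 (1 / 2)) := by
    have hinv := tendsto_one_div_add_atTop_nhds_zero_nat (𝕜 := ℝ)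
    simpa [Pi.div_def] using
      (((hinv.const_mul (t ^ 2)).mul hinv).const_add 1).div (hinv.const_sub 2) (by norm_num)
  exact (summable_of_ratio_test_tendsto_lt_one (l := 1 / 2) (by norm_num)
    (.of_forall fun n => (hpos n).ne') (hlim.congr fun n => (hratio n).symm)).tendsto_atTop_zero

lemma hasSum_ahsMultiplier (t : ℝ) :
    HasSum (ahsMultiplier t) (2 * coshSinIntegral t 0) := by
  rw [hasSum_iff_tendsto_nat_of_nonneg fun n => (ahsMultiplier_pos t n).le]
  simp_rw [sum_range_ahsMultiplier]
  have hrem : Tendsto (fun n : ℕ =>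
      (2 * n + 1 : ℝ) * ahsMultiplier t n * (2 * coshSinIntegral t n)) atTop (𝓝 0) := by
    refine (tendsto_mul_ahsMultiplier t).zero_mul_isBoundedUnder_le ?_
    refine isBoundedUnder_of ⟨2 * coshSinIntegral t 0, fun n => ?_⟩
    have hnonneg := coshSinIntegral_nonneg t n
    have hle := coshSinIntegral_le t n
    rw [Function.comp_apply, Real.norm_of_nonneg (by positivity)]
    linarith
  simpa using hrem.const_sub (2 * coshSinIntegral t 0)

lemma integral_exp_eq_coshSinIntegral (t : ℝ) :
    ∫ θ in (-(Real.pi / 4))..(Real.pi / 4), Real.exp (2 * t * θ) = 2 * coshSinIntegral t 0 := by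
  have hint (s a b : ℝ) : IntervalIntegrable (fun θ => Real.exp (s * θ)) volume a b :=
    Continuous.intervalIntegrable (by fun_prop) _ _
  have hneg : ∫ θ in (-(Real.pi / 4))..0, Real.exp (2 * t * θ) =
      ∫ θ in (0 : ℝ)..(Real.pi / 4), Real.exp (-(2 * t) * θ) := by
    simpa using (intervalIntegral.integral_comp_neg (a := 0) (b := Real.pi / 4)
      fun θ => Real.exp (2 * t * θ)).symm
  rw [← intervalIntegral.integral_add_adjacent_intervals (hint _ _ 0) (hint _ 0 _), hneg,
    ← intervalIntegral.integral_add (hint _ _ _) (hint _ _ _), coshSinIntegral,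
    ← intervalIntegral.integral_const_mul]
  refine intervalIntegral.integral_congr fun θ _ => ?_
  simp only [Real.cosh_eq]
  ring_nf

lemma tsum_ofReal_ahsMultiplier (ξ : ℝ) :
    ∑' n, ENNReal.ofReal (ahsMultiplier (2 * Real.pi * ξ) n) = stripWeight (Real.pi / 4) ξ := by
  have hle : -(Real.pi / 4) ≤ Real.pi / 4 := by linarith [Real.pi_pos]
  have hint : IntervalIntegrable (fun θ => Real.exp (4 * Real.pi * ξ * θ)) volume
      (-(Real.pi / 4)) (Real.pi / 4) := Continuous.intervalIntegrable (by fun_prop) _ _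
  rw [← ENNReal.ofReal_tsum_of_nonneg (fun n => (ahsMultiplier_pos _ n).le)
    (hasSum_ahsMultiplier _).summable, (hasSum_ahsMultiplier _).tsum_eq,
    ← integral_exp_eq_coshSinIntegral, intervalIntegral.integral_of_le hle, stripWeight,
    setLIntegral_congr Ioo_ae_eq_Ioc,
    ← ofReal_integral_eq_lintegral_ofReal
      ((intervalIntegrable_iff_integrableOn_Ioc_of_le hle).1 hint)
      (.of_forall fun θ => (Real.exp_pos _).le)]
  ring_nf

end Weight

lemma setLIntegral_Ioi_eq_lintegral_exp (g : ℝ → ℝ≥0∞) :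
    ∫⁻ x in Ioi (0 : ℝ), g x = ∫⁻ u : ℝ, ENNReal.ofReal (Real.exp u) * g (Real.exp u) := by
  have hsubst := lintegral_image_eq_lintegral_abs_deriv_mul MeasurableSet.univ
    (fun u _ => (Real.hasDerivAt_exp u).hasDerivWithinAt) Real.exp_injective.injOn g
  simpa only [image_univ, Real.range_exp, setLIntegral_univ, Real.abs_exp] using hsubst

section LogPullback

variable {E : Type*} [NormedAddCommGroup E]

/-- The function `x ^ (n + 1) f⁽ⁿ⁾(x)` on `(0, ∞)` read in the logarithmic coordinate
`u = log x`; an extra power of `x` makes the weighted norms of the Aikawa–Hayashi–Saitoh series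
plain `L²` norms. -/
noncomputable def logPullback [NormedSpace ℝ E] (f : ℝ → E) (n : ℕ) (u : ℝ) : E :=
  Real.exp u ^ (n + 1) • iteratedDerivWithin n f (Ioi 0) (Real.exp u)

/-- The Aikawa–Hayashi–Saitoh series of `f`, which equals the squared `L²` norm of the holomorphic
extension of `f` to `Delta`. -/
noncomputable def ahsSum [NormedSpace ℝ E] (f : ℝ → E) : ℝ≥0∞ :=
  ∑' n : ℕ, ENNReal.ofReal ((2 : ℝ) ^ n / (Nat.factorial (2 * n + 1) : ℝ)) *
    ∫⁻ x in Ioi (0 : ℝ), ENNReal.ofReal (x ^ (2 * n + 1)) * ‖iteratedDerivWithin n f (Ioi 0) x‖ₑ ^ 2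

section Real

variable [NormedSpace ℝ E] {f : ℝ → E}

lemma hasDerivAt_logPullback (hf : ContDiffOn ℝ (⊤ : ℕ∞) f (Ioi 0)) (n : ℕ) (u : ℝ) :
    HasDerivAt (logPullback f n)
      ((n + 1 : ℝ) • logPullback f n u + logPullback f (n + 1) u) u := by
  have hdiff : DifferentiableOn ℝ (iteratedDerivWithin n f (Ioi 0)) (Ioi 0) :=
    hf.differentiableOn_iteratedDerivWithin (by exact_mod_cast WithTop.coe_lt_top n)
      (uniqueDiffOn_Ioi 0)
  have hderiv : HasDerivAt (iteratedDerivWithin n f (Ioi 0))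
      (iteratedDerivWithin (n + 1) f (Ioi 0) (Real.exp u)) (Real.exp u) := by
    rw [iteratedDerivWithin_succ]
    exact (hdiff _ (Real.exp_pos u)).hasDerivWithinAt.hasDerivAt (Ioi_mem_nhds (Real.exp_pos u))
  refine (((Real.hasDerivAt_exp u).pow (n + 1)).smul
    (hderiv.scomp u (Real.hasDerivAt_exp u))).congr_deriv ?_
  simp only [logPullback, Function.comp_apply, Pi.pow_apply, smul_smul, Nat.add_sub_cancel,
    Nat.cast_add_one]
  rw [add_comm]
  ring_nf

lemma continuous_logPullback (hf : ContDiffOn ℝ (⊤ : ℕ∞) f (Ioi 0)) (n : ℕ) :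
    Continuous (logPullback f n) :=
  continuous_iff_continuousAt.2 fun u => (hasDerivAt_logPullback hf n u).continuousAt

lemma lintegral_enorm_sq_logPullback (f : ℝ → E) (n : ℕ) :
    ∫⁻ u, ‖logPullback f n u‖ₑ ^ 2 =
      ∫⁻ x in Ioi (0 : ℝ),
        ENNReal.ofReal (x ^ (2 * n + 1)) * ‖iteratedDerivWithin n f (Ioi 0) x‖ₑ ^ 2 := by
  rw [setLIntegral_Ioi_eq_lintegral_exp]
  refine lintegral_congr fun u => ?_
  have hexp : 0 ≤ Real.exp u := (Real.exp_pos u).le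
  rw [logPullback, enorm_smul, mul_pow, Real.enorm_of_nonneg (pow_nonneg hexp _),
    ← ENNReal.ofReal_pow (pow_nonneg hexp _), ← mul_assoc, ← ENNReal.ofReal_mul hexp]
  ring_nf

lemma memLp_logPullback (hf : ContDiffOn ℝ (⊤ : ℕ∞) f (Ioi 0)) (hsum : ahsSum f ≠ ⊤) (n : ℕ) :
    MemLp (logPullback f n) 2 := by
  refine memLp_two_of_lintegral_enorm_sq_ne_top
    (continuous_logPullback hf n).aestronglyMeasurable fun htop => ?_
  refine ENNReal.ne_top_of_tsum_ne_top hsum n ?_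
  have hcoeff : (0 : ℝ) < 2 ^ n / (2 * n + 1).factorial := by positivity
  rw [← lintegral_enorm_sq_logPullback, htop, ENNReal.mul_top (by simpa using hcoeff)]

end Real

variable [InnerProductSpace ℂ E] [CompleteSpace E] {f : ℝ → E}

lemma fourierInv_logPullback_ae_eq (hf : ContDiffOn ℝ (⊤ : ℕ∞) f (Ioi 0))
    (hmem : ∀ n, MemLp (logPullback f n) 2) (n : ℕ) :
    (𝓕⁻ ((hmem n).toLp _) : Lp E 2 (volume : Measure ℝ)) =ᵐ[volume]
      fun ξ => (∏ k ∈ Finset.range n, (-((k + 1 : ℂ) + 2 * Real.pi * Complex.I * ξ))) •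
        (𝓕⁻ ((hmem 0).toLp _) : Lp E 2 (volume : Measure ℝ)) ξ := by
  induction n with
  | zero => simp
  | succ n ih =>
    have hstep := fourierInv_toLp_of_hasDerivAt_add (n + 1 : ℂ) (hmem n) (hmem (n + 1))
      fun u => by
        convert hasDerivAt_logPullback hf n u using 2
        rw [← Complex.coe_smul]
        push_cast
        rfl
    filter_upwards [ih, hstep] with ξ hξ hstepξ
    rw [hstepξ, hξ, smul_smul, Finset.prod_range_succ, mul_comm]

lemma enorm_prod_sq_mul_eq_ofReal_ahsMultiplier (n : ℕ) (ξ : ℝ) :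
    ENNReal.ofReal (2 ^ n / (2 * n + 1).factorial) *
        ‖∏ k ∈ Finset.range n, (-((k + 1 : ℂ) + 2 * Real.pi * Complex.I * ξ))‖ₑ ^ 2 =
      ENNReal.ofReal (ahsMultiplier (2 * Real.pi * ξ) n) := by
  rw [ahsMultiplier, ENNReal.ofReal_mul (by positivity), ← ofReal_norm,
    ← ENNReal.ofReal_pow (norm_nonneg _), norm_prod, ← Finset.prod_pow]
  congr 2
  refine Finset.prod_congr rfl fun k _ => ?_
  rw [norm_neg, ← Complex.normSq_eq_norm_sq, Complex.normSq_apply]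
  simp only [Complex.add_re, Complex.add_im, Complex.mul_re, Complex.mul_im, Complex.natCast_re,
    Complex.natCast_im, Complex.one_re, Complex.one_im, Complex.I_re, Complex.I_im,
    Complex.ofReal_re, Complex.ofReal_im, Complex.re_ofNat, Complex.im_ofNat]
  ring

lemma ahsSum_eq_lintegral_stripWeight (hf : ContDiffOn ℝ (⊤ : ℕ∞) f (Ioi 0))
    (hmem : ∀ n, MemLp (logPullback f n) 2) :
    ahsSum f = ∫⁻ ξ, ‖(𝓕⁻ ((hmem 0).toLp _) : Lp E 2 (volume : Measure ℝ)) ξ‖ₑ ^ 2 *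
      stripWeight (Real.pi / 4) ξ := by
  set A : Lp E 2 (volume : Measure ℝ) := 𝓕⁻ ((hmem 0).toLp _)
  have hterm (n : ℕ) : ENNReal.ofReal (2 ^ n / (2 * n + 1).factorial) *
      ∫⁻ x in Ioi (0 : ℝ),
        ENNReal.ofReal (x ^ (2 * n + 1)) * ‖iteratedDerivWithin n f (Ioi 0) x‖ₑ ^ 2 =
      ∫⁻ ξ, ‖A ξ‖ₑ ^ 2 * ENNReal.ofReal (ahsMultiplier (2 * Real.pi * ξ) n) := by
    rw [← lintegral_enorm_sq_logPullback, ← lintegral_enorm_sq_fourierInv_toLp (hmem n),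
      ← lintegral_const_mul' _ _ ENNReal.ofReal_ne_top]
    refine lintegral_congr_ae ?_
    filter_upwards [fourierInv_logPullback_ae_eq hf hmem n] with ξ hξ
    rw [hξ, enorm_smul, mul_pow, ← mul_assoc, enorm_prod_sq_mul_eq_ofReal_ahsMultiplier, mul_comm]
  have hmeas (n : ℕ) :
      AEMeasurable fun ξ => ‖A ξ‖ₑ ^ 2 * ENNReal.ofReal (ahsMultiplier (2 * Real.pi * ξ) n) := by
    have hA : AEMeasurable fun ξ => ‖A ξ‖ₑ ^ 2 := (Lp.aestronglyMeasurable A).enorm.pow_const 2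
    refine hA.mul (Measurable.aemeasurable ?_)
    unfold ahsMultiplier
    fun_prop
  simp only [ahsSum, hterm]
  rw [← lintegral_tsum hmeas]
  simp_rw [ENNReal.tsum_mul_left, tsum_ofReal_ahsMultiplier]

lemma fourierLaplace_fourierInv_toLp_eq {h : ℝ → E} (hcont : Continuous h) (hh : MemLp h 2)
    {α : ℝ} (hα : 0 < α)
    (hfin : ∫⁻ ξ, ‖(𝓕⁻ (hh.toLp h) : Lp E 2 (volume : Measure ℝ)) ξ‖ₑ ^ 2 * stripWeight α ξ ≠ ⊤)
    (u : ℝ) : fourierLaplace (𝓕⁻ (hh.toLp h) : Lp E 2 (volume : Measure ℝ)) u = h u := by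
  set A : Lp E 2 (volume : Measure ℝ) := 𝓕⁻ (hh.toLp h) with hA
  have hmeas := Lp.aestronglyMeasurable A
  have hint : Integrable A := by
    simpa using integrable_exp_abs_smul hmeas hfin le_rfl hα
  have hreal (u : ℝ) : fourierLaplace A u = 𝓕 (A : ℝ → E) u := by
    simpa using fourierLaplace_eq_fourier A u 0
  have hae : (fun u : ℝ => fourierLaplace A u) =ᵐ[volume] h := by
    have hinv := fourier_toLp_ae_eq hint (Lp.memLp A)
    rw [Lp.toLp_coeFn, hA, FourierTransform.fourier_fourierInv_eq, ← hA] at hinv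
    filter_upwards [hinv, hh.coeFn_toLp] with u hu hhu
    rw [hreal, ← hu, hhu]
  have hcontA : Continuous fun u : ℝ => fourierLaplace A u :=
    (differentiableOn_fourierLaplace hmeas hfin).continuousOn.comp_continuous
      Complex.continuous_ofReal fun u => by simpa [horizontalStrip] using hα
  exact congrFun ((hcontA.ae_eq_iff_eq volume hcont).1 hae) u

end LogPullback

theorem ahs_extension_general {E : Type*} [NormedAddCommGroup E] [InnerProductSpace ℂ E]
    [CompleteSpace E] (f : ℝ → E) (hf : ContDiffOn ℝ (⊤ : ℕ∞) f (Ioi 0)) (hsum : ahsSum f < ⊤) :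
    ∃ F : ℂ → E, DifferentiableOn ℂ F Delta ∧ (∀ x : ℝ, 0 < x → F (x : ℂ) = f x) ∧
      ∫⁻ z in Delta, ‖F z‖ₑ ^ 2 = ahsSum f := by
  have hmem := memLp_logPullback hf hsum.ne
  have hseries := ahsSum_eq_lintegral_stripWeight hf hmem
  set A : Lp E 2 (volume : Measure ℝ) := 𝓕⁻ ((hmem 0).toLp _)
  have hfin : ∫⁻ ξ, ‖A ξ‖ₑ ^ 2 * stripWeight (Real.pi / 4) ξ ≠ ⊤ := hseries ▸ hsum.ne
  have hA := Lp.aestronglyMeasurable A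
  refine ⟨fun z => z⁻¹ • fourierLaplace A (Complex.log z),
    differentiableOn_inv_smul_comp_log (differentiableOn_fourierLaplace hA hfin),
    fun x hx => ?_, ?_⟩
  · beta_reduce
    rw [← Complex.ofReal_log hx.le, fourierLaplace_fourierInv_toLp_eq
      (continuous_logPullback hf 0) (hmem 0) (by positivity) hfin, logPullback, zero_add, pow_one,
      Real.exp_log hx, iteratedDerivWithin_zero, ← Complex.ofReal_inv, Complex.coe_smul,
      inv_smul_smul₀ hx.ne']
  · rw [← exp_image_horizontalStrip, lintegral_enorm_sq_inv_smul_comp_log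
      (by linarith [Real.pi_pos]), lintegral_enorm_sq_fourierLaplace hA hfin, hseries]

/-- If `f : ℝ → ℂ` is smooth on `(0,∞)` and the AHS sum is finite, then `f` extends
holomorphically to the sector `Δ`, the extension lies in the Bergman space `A²(Δ)`, and the
AHS identity holds for the extension. -/
theorem ahs_extension (f : ℝ → ℂ) (hf : ContDiffOn ℝ (⊤ : ℕ∞) f (Ioi 0))
    (hsum :
      ∑' n : ℕ, ENNReal.ofReal ((2 : ℝ) ^ n / (Nat.factorial (2 * n + 1) : ℝ)) *
        ∫⁻ x in Ioi (0 : ℝ),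
          ENNReal.ofReal (x ^ (2 * n + 1)) *
            (‖iteratedDerivWithin n f (Ioi 0) x‖₊ : ℝ≥0∞) ^ 2 ∂volume < ⊤) :
    ∃ F : ℂ → ℂ, DifferentiableOn ℂ F Delta ∧ (∀ x : ℝ, 0 < x → F (x : ℂ) = f x) ∧
      ∫⁻ z in Delta, (‖F z‖₊ : ℝ≥0∞) ^ 2 ∂volume =
        ∑' n : ℕ, ENNReal.ofReal ((2 : ℝ) ^ n / (Nat.factorial (2 * n + 1) : ℝ)) *
          ∫⁻ x in Ioi (0 : ℝ),
            ENNReal.ofReal (x ^ (2 * n + 1)) *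
              (‖iteratedDerivWithin n f (Ioi 0) x‖₊ : ℝ≥0∞) ^ 2 ∂volume :=
  ahs_extension_general f hf hsum
end
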